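/- Under the stated assumptions including non-periodicity, for every even integer k ≥ 0, (1/A(N)) Σ_{1≤n≤N} b_k(n) ∼ (k!/(2^{k/2} (k/2)!)) σ^{k} (log N)^{k/2} as N → ∞. -/

import Mathlib

open scoped BigOperators ENNReal
open Filter Asymptotics

noncomputable section

/-- `af P m n` is the number of ordered `m`-tuples `(n₁,…,n_m)` of elements of `P`
with product `n` (so `af P 0 n = 1` iff `n = 1`). -/
def af (P : Set ℕ) (m n : ℕ) : ℕ :=
  Nat.card {t : Fin m → ℕ // (∀ i, t i ∈ P) ∧ ∏ i, t i = n}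

/-- `aTot P n = a(n) = Σ_{m ≥ 0} a_m(n)`. -/
def aTot (P : Set ℕ) (n : ℕ) : ℝ := ∑' m : ℕ, (af P m n : ℝ)

/-- `Acum P N = A(N) = Σ_{1 ≤ n ≤ N} a(n)`. -/
def Acum (P : Set ℕ) (N : ℕ) : ℝ := ∑ n ∈ Finset.Icc 1 N, aTot P n

/-- The Dirichlet series `𝒫(x) = Σ_{n ∈ 𝒫} n^{-x}` at a real point. -/
def Pval (P : Set ℕ) (x : ℝ) : ℝ := ∑' n : P, ((n : ℕ) : ℝ) ^ (-x)

/-- `𝒫'(x) = -Σ_{n ∈ 𝒫} n^{-x} log n`. -/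
def Pderiv1 (P : Set ℕ) (x : ℝ) : ℝ := -∑' n : P, ((n : ℕ) : ℝ) ^ (-x) * Real.log (n : ℕ)

/-- `𝒫''(x) = Σ_{n ∈ 𝒫} n^{-x} (log n)^2`. -/
def Pderiv2 (P : Set ℕ) (x : ℝ) : ℝ := ∑' n : P, ((n : ℕ) : ℝ) ^ (-x) * (Real.log (n : ℕ)) ^ 2

/-- The abscissa of convergence `κ` of the Dirichlet series of `P`, as an extended real
(`⊥` when `P` is finite). -/
def kappa (P : Set ℕ) : EReal :=
  sInf {x : EReal | ∃ r : ℝ, x = (r : EReal) ∧ Summable (fun n : P => ((n : ℕ) : ℝ) ^ (-r))}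

open Classical in
/-- The (possibly infinite) value `𝒫(x) ∈ (0,∞]` of the Dirichlet series at an
extended-real point; at `x = -∞` every term `n^{-x}` is infinite. -/
def PvalE (P : Set ℕ) (x : EReal) : ℝ≥0∞ :=
  if x = ⊥ then ⊤ else ∑' n : P, ENNReal.ofReal (((n : ℕ) : ℝ) ^ (-x.toReal))

/-- `b_k(n) = Σ_{m ≥ 0} a_m(n) (m - μ log n)^k`. -/
def bCoef (P : Set ℕ) (μ : ℝ) (k n : ℕ) : ℝ :=
  ∑' m : ℕ, (af P m n : ℝ) * ((m : ℝ) - μ * Real.log n) ^ k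

/-!
The Dirichlet series `B_k` of `b_k` satisfy a binomial recursion in the step series
`F_i(s) = Σ_{n ∈ 𝒫} (1 - μ log n)^i n^{-s}`, obtained by splitting off the first factor of a tuple.
The function `1 - F_0` has a simple zero at `ρ` and, by non-periodicity, no other zero in
`Re s ≥ ρ`. The choice of `μ` amounts to `F_1(ρ) = 0`, so two steps of the recursion are needed to
raise the order of the pole at `ρ` by one: `B_{2p}` has a pole of order `p + 1`, with leading
coefficient `μ σ^{2p} (2p)! / 2^p`, and the order of `B_{2p+1}` is no larger. A Wiener–Ikehara
theorem for poles of higher order, proved by averaging against a nonnegative band-limited kernel,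
turns this into `Σ_{n ≤ N} b_{2p}(n) ∼ μ ρ⁻¹ (2p)! / (2^p p!) σ^{2p} N^ρ (log N)^p`, to be divided
by its case `p = 0`.
-/

section BandLimited

open MeasureTheory Set Topology FourierTransform
open scoped ContDiff

/-- A band-limited kernel: a real function that is the Fourier transform of a continuous
compactly supported function. -/
def IsBandLimited (k : ℝ → ℝ) : Prop :=
  ∃ φ : ℝ → ℂ, Continuous φ ∧ HasCompactSupport φ ∧ ∀ y, 𝓕 φ y = k y

variable {k : ℝ → ℝ}

lemma IsBandLimited.continuous (hk : IsBandLimited k) : Continuous k := by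
  obtain ⟨φ, hφ, hsupp, hφk⟩ := hk
  have h𝓕 : Continuous (𝓕 φ) :=
    VectorFourier.fourierIntegral_continuous Real.continuous_fourierChar continuous_inner
      (hφ.integrable_of_hasCompactSupport hsupp)
  have hre : k = fun y => (𝓕 φ y).re := by ext y; rw [hφk, Complex.ofReal_re]
  exact hre ▸ Complex.continuous_re.comp h𝓕

lemma IsBandLimited.exists_norm_le (hk : IsBandLimited k) : ∃ C, ∀ y, ‖k y‖ ≤ C := by
  obtain ⟨φ, -, -, hφk⟩ := hk
  refine ⟨∫ v, ‖φ v‖, fun y => ?_⟩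
  rw [← Complex.norm_real, ← hφk]
  exact VectorFourier.norm_fourierIntegral_le_integral_norm _ _ _ _ _

lemma IsBandLimited.comp_mul_left (hk : IsBandLimited k) {l : ℝ} (hl : 0 < l) :
    IsBandLimited fun y => k (l * y) := by
  obtain ⟨φ, hφ, hsupp, hφk⟩ := hk
  refine ⟨fun v => (l⁻¹ : ℂ) * φ (l⁻¹ * v), by fun_prop,
    (hsupp.comp_homeomorph (Homeomorph.mulLeft₀ l⁻¹ (inv_ne_zero hl.ne'))).mul_left, fun y => ?_⟩
  have hscale := Measure.integral_comp_mul_left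
    (fun u : ℝ => Complex.exp (↑(-2 * Real.pi * u * (l * y)) * Complex.I) • φ u) l⁻¹
  rw [inv_inv, abs_of_pos hl, eq_comm, ← eq_inv_smul_iff₀ hl.ne'] at hscale
  rw [← hφk, Real.fourier_real_eq_integral_exp_smul, Real.fourier_real_eq_integral_exp_smul,
    hscale, ← integral_smul]
  congr 1 with v
  rw [show -2 * Real.pi * (l⁻¹ * v) * (l * y) = -2 * Real.pi * v * y by field_simp]
  simp only [smul_eq_mul, Complex.real_smul]
  push_cast
  ring

lemma ofReal_re_fourier_of_even {f : ℝ → ℝ} (hf : ∀ v, f (-v) = f v) (y : ℝ) :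
    ((𝓕 (fun v => (f v : ℂ)) y).re : ℂ) = 𝓕 (fun v => (f v : ℂ)) y := by
  refine Complex.conj_eq_iff_re.mp ?_
  calc (starRingEnd ℂ) (𝓕 (fun v => (f v : ℂ)) y) = 𝓕⁻ (fun v => (f v : ℂ)) y := by
        rw [Real.fourier_real_eq_integral_exp_smul, Real.fourierInv_eq', ← integral_conj]
        congr 1 with v
        simp [← Complex.exp_conj, Complex.conj_ofNat, mul_comm, mul_assoc, mul_left_comm]
    _ = 𝓕 (fun v => (f v : ℂ)) y := by
        simp only [Real.fourierInv_eq_fourier_comp_neg, hf]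

/-- The kernel is `(𝓕 f)²` for an even bump function `f`; it is the transform of `f ⋆ f`. -/
lemma exists_isBandLimited_nonneg_integrable :
    ∃ k : ℝ → ℝ, IsBandLimited k ∧ (∀ y, 0 ≤ k y) ∧ Integrable k ∧ 0 < ∫ y, k y := by
  obtain ⟨f⟩ : Nonempty (ContDiffBump (0 : ℝ)) := inferInstance
  set F : ℝ → ℂ := fun v => (f v : ℂ)
  have hFsmooth : ContDiff ℝ ∞ F := Complex.ofRealCLM.contDiff.comp f.contDiff
  have hFsupp : HasCompactSupport F := f.hasCompactSupport.comp_left Complex.ofReal_zero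
  have hFint : Integrable F := hFsmooth.continuous.integrable_of_hasCompactSupport hFsupp
  have hre : ∀ y, ((𝓕 F y).re : ℂ) = 𝓕 F y := ofReal_re_fourier_of_even f.neg
  have hk : IsBandLimited fun y => (𝓕 F y).re ^ 2 :=
    ⟨convolution F F (ContinuousLinearMap.mul ℂ ℂ) volume,
      hFsupp.continuous_convolution_right _ hFint.locallyIntegrable hFsmooth.continuous,
      hFsupp.convolution _ hFsupp, fun y => by
        rw [Real.fourier_mul_convolution_eq hFint hFint, ← hre y]; push_cast; ring⟩
  have hL2 : Integrable fun y => (𝓕 F y).re ^ 2 := by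
    have := (𝓕 (hFsupp.toSchwartzMap hFsmooth)).memLp 2 volume
    rw [SchwartzMap.fourier_coe] at this
    exact this.re.integrable_sq
  refine ⟨_, hk, fun y => sq_nonneg _, hL2,
    integral_pos_of_integrable_nonneg_nonzero hk.continuous hL2 (fun y => sq_nonneg _)
      (x := 0) (pow_ne_zero 2 ?_)⟩
  rw [Real.fourier_real_eq_integral_exp_smul]
  have : ∫ v, F v = ((∫ v, f v : ℝ) : ℂ) := integral_ofReal
  simpa [this] using f.integral_pos.ne'

end BandLimited

section KernelMean

open MeasureTheory Set Topology

/-- The average of `S` near `T` against the kernel `k`, tempered at infinity by the factor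
`exp (-x / T)`, which is comparable to `1` where the kernel is concentrated. -/
def kernelMean (k S : ℝ → ℝ) (T : ℝ) : ℝ :=
  ∫ x in Ioi 0, S x * Real.exp (-(x / T)) * k (T - x)

variable {k S : ℝ → ℝ} {ρ h T x y : ℝ}

lemma le_exp_mul_of_monotone_mul_exp (hS : Monotone fun x => S x * Real.exp (ρ * x))
    (hxy : x ≤ y) : S x ≤ Real.exp (ρ * (y - x)) * S y := by
  have h := hS hxy
  rw [← le_div_iff₀ (Real.exp_pos _), mul_div_assoc, ← Real.exp_sub, ← mul_sub] at h
  linarith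

lemma mul_exp_le_mul_exp_neg_div (hρ : 0 ≤ ρ) (hS0 : ∀ x, 0 ≤ S x)
    (hS : Monotone fun x => S x * Real.exp (ρ * x)) (hT : 0 < T)
    (hx : x ∈ Icc (T - h) (T + h)) :
    S (T - h) * Real.exp (-(2 * ρ * h + 1 + h / T)) ≤ S x * Real.exp (-(x / T)) := by
  have h1 : x / T ≤ 1 + h / T := by
    rw [← div_self hT.ne', ← add_div]; gcongr; exact hx.2
  have h2 : ρ * (x - (T - h)) ≤ ρ * (2 * h) := by gcongr; linarith [hx.2]
  calc S (T - h) * Real.exp (-(2 * ρ * h + 1 + h / T))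
      ≤ Real.exp (ρ * (x - (T - h))) * S x * Real.exp (-(2 * ρ * h + 1 + h / T)) := by
        gcongr; exact le_exp_mul_of_monotone_mul_exp hS hx.1
    _ = S x * Real.exp (ρ * (x - (T - h)) + -(2 * ρ * h + 1 + h / T)) := by
        rw [Real.exp_add]; ring
    _ ≤ S x * Real.exp (-(x / T)) :=
        mul_le_mul_of_nonneg_left (Real.exp_le_exp.mpr (by linarith)) (hS0 x)

lemma mul_exp_neg_div_le_mul_exp (hρ : 0 ≤ ρ) (hS0 : ∀ x, 0 ≤ S x)
    (hS : Monotone fun x => S x * Real.exp (ρ * x)) (hT : 0 < T)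
    (hx : x ∈ Icc (T - h) (T + h)) :
    S x * Real.exp (-(x / T)) ≤ S (T + h) * Real.exp (2 * ρ * h - 1 + h / T) := by
  have h1 : 1 - h / T ≤ x / T := by
    rw [← div_self hT.ne', ← sub_div]; gcongr; exact hx.1
  have h2 : ρ * (T + h - x) ≤ ρ * (2 * h) := by gcongr; linarith [hx.1]
  calc S x * Real.exp (-(x / T))
      ≤ Real.exp (ρ * (T + h - x)) * S (T + h) * Real.exp (-(x / T)) := by
        gcongr; exact le_exp_mul_of_monotone_mul_exp hS hx.2
    _ = S (T + h) * Real.exp (ρ * (T + h - x) + -(x / T)) := by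
        rw [Real.exp_add]; ring
    _ ≤ S (T + h) * Real.exp (2 * ρ * h - 1 + h / T) :=
        mul_le_mul_of_nonneg_left (Real.exp_le_exp.mpr (by linarith)) (hS0 _)

lemma mul_integral_le_kernelMean (hρ : 0 ≤ ρ) (hS0 : ∀ x, 0 ≤ S x)
    (hS : Monotone fun x => S x * Real.exp (ρ * x)) (hk0 : ∀ y, 0 ≤ k y) (hk : Continuous k)
    (hh : 0 < h) (hT : h < T)
    (hint : IntegrableOn (fun x => S x * Real.exp (-(x / T)) * k (T - x)) (Ioi 0)) :
    S (T - h) * Real.exp (-(2 * ρ * h + 1 + h / T)) * ∫ y in -h..h, k y ≤ kernelMean k S T := by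
  have hsub : Ioc (T - h) (T + h) ⊆ Ioi 0 := fun x hx => (sub_pos.mpr hT).trans hx.1
  calc S (T - h) * Real.exp (-(2 * ρ * h + 1 + h / T)) * ∫ y in -h..h, k y
      = ∫ x in Ioc (T - h) (T + h),
          S (T - h) * Real.exp (-(2 * ρ * h + 1 + h / T)) * k (T - x) := by
        rw [← intervalIntegral.integral_of_le (by linarith), intervalIntegral.integral_const_mul,
          intervalIntegral.integral_comp_sub_left, sub_add_cancel_left, sub_sub_cancel]
    _ ≤ ∫ x in Ioc (T - h) (T + h), S x * Real.exp (-(x / T)) * k (T - x) :=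
        setIntegral_mono_on (Continuous.integrableOn_Ioc (by fun_prop))
          (hint.mono_set hsub) measurableSet_Ioc fun x hx => mul_le_mul_of_nonneg_right
            (mul_exp_le_mul_exp_neg_div hρ hS0 hS (hh.trans hT) (Ioc_subset_Icc_self hx)) (hk0 _)
    _ ≤ kernelMean k S T := setIntegral_mono_set hint
        (Eventually.of_forall fun x => mul_nonneg (mul_nonneg (hS0 x) (Real.exp_pos _).le) (hk0 _))
        hsub.eventuallyLE

lemma kernelMean_le_add (hρ : 0 ≤ ρ) (hS0 : ∀ x, 0 ≤ S x)
    (hS : Monotone fun x => S x * Real.exp (ρ * x)) (hk0 : ∀ y, 0 ≤ k y) (hk : Integrable k)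
    {B : ℝ} (hh : 0 ≤ h) (hT : 0 < T) (hB : ∀ x, 0 < x → S x * Real.exp (-(x / T)) ≤ B) :
    kernelMean k S T ≤ S (T + h) * Real.exp (2 * ρ * h - 1 + h / T) * (∫ y, k y) +
      B * ((∫ y, k y) - ∫ y in -h..h, k y) := by
  set E : ℝ := S (T + h) * Real.exp (2 * ρ * h - 1 + h / T)
  set g : ℝ → ℝ := fun y => E * k y + B * (k y - (Ioc (-h) h).indicator k y) with hg
  have hE : 0 ≤ E := mul_nonneg (hS0 _) (Real.exp_pos _).le
  have hB0 : 0 ≤ B := (mul_nonneg (hS0 1) (Real.exp_pos _).le).trans (hB 1 one_pos)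
  have hind : Integrable ((Ioc (-h) h).indicator k) := hk.indicator measurableSet_Ioc
  have hdiff : Integrable fun y => k y - (Ioc (-h) h).indicator k y := hk.sub hind
  have hgi : Integrable g := (hk.const_mul _).add (hdiff.const_mul _)
  have hg0 : ∀ y, 0 ≤ g y := fun y =>
    add_nonneg (mul_nonneg hE (hk0 y)) (mul_nonneg hB0
      (sub_nonneg.mpr (indicator_le_self' (fun _ _ => hk0 _) y)))
  have hle : ∀ x ∈ Ioi (0 : ℝ), S x * Real.exp (-(x / T)) * k (T - x) ≤ g (T - x) := by
    intro x hx
    by_cases hxT : T - x ∈ Ioc (-h) h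
    · have hx' : x ∈ Icc (T - h) (T + h) := ⟨by linarith [hxT.2], by linarith [hxT.1]⟩
      simpa only [hg, indicator_of_mem hxT, sub_self, mul_zero, add_zero] using
        mul_le_mul_of_nonneg_right (mul_exp_neg_div_le_mul_exp hρ hS0 hS hT hx') (hk0 _)
    · simp only [hg, indicator_of_notMem hxT, sub_zero]
      exact (mul_le_mul_of_nonneg_right (hB x hx) (hk0 _)).trans
        (le_add_of_nonneg_left (mul_nonneg hE (hk0 _)))
  calc kernelMean k S T ≤ ∫ x in Ioi 0, g (T - x) :=
        integral_mono_of_nonneg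
          (.of_forall fun x => mul_nonneg (mul_nonneg (hS0 x) (Real.exp_pos _).le) (hk0 _))
          (hgi.comp_sub_left T).integrableOn (ae_restrict_of_forall_mem measurableSet_Ioi hle)
    _ ≤ ∫ x, g (T - x) :=
        setIntegral_le_integral (hgi.comp_sub_left T) (.of_forall fun x => hg0 _)
    _ = E * (∫ y, k y) + B * ((∫ y, k y) - ∫ y in -h..h, k y) := by
        rw [integral_sub_left_eq_self g, integral_add (hk.const_mul _) (hdiff.const_mul _),
          integral_const_mul, integral_const_mul, integral_sub hk hind,
          integral_indicator measurableSet_Ioc, intervalIntegral.integral_of_le (by linarith)]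

end KernelMean

section TauberianFromMeans

open MeasureTheory Set Topology

variable {k S : ℝ → ℝ} {ρ w h u B : ℝ} {p : ℕ}

lemma tendsto_const_div_add_atTop (h c : ℝ) :
    Tendsto (fun x : ℝ => c / (x + h)) atTop (𝓝 0) :=
  tendsto_const_nhds.div_atTop (tendsto_atTop_add_const_right _ _ tendsto_id)

lemma tendsto_add_div_self_atTop (h : ℝ) : Tendsto (fun x : ℝ => (x + h) / x) atTop (𝓝 1) := by
  have h1 : Tendsto (fun x : ℝ => 1 + h / x) atTop (𝓝 (1 + 0)) :=
    tendsto_const_nhds.add (tendsto_const_nhds.div_atTop tendsto_id)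
  rw [add_zero] at h1
  refine h1.congr' ?_
  filter_upwards [eventually_ne_atTop 0] with x hx
  rw [add_div, div_self hx]

lemma eventually_div_pow_lt_of_kernelMean (hρ : 0 ≤ ρ) (hS0 : ∀ x, 0 ≤ S x)
    (hS : Monotone fun x => S x * Real.exp (ρ * x)) (hk0 : ∀ y, 0 ≤ k y) (hk : Continuous k)
    (hint : ∀ T > 0, IntegrableOn (fun x => S x * Real.exp (-(x / T)) * k (T - x)) (Ioi 0))
    (hmean : Tendsto (fun T => kernelMean k S T / T ^ p) atTop
      (𝓝 (w * (Real.exp (-1) * ∫ y, k y))))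
    (hh : 0 < h) (hkh : 0 < ∫ y in -h..h, k y)
    (hu : w * Real.exp (2 * ρ * h) * (∫ y, k y) / (∫ y in -h..h, k y) < u) :
    ∀ᶠ x in atTop, S x / x ^ p < u := by
  have hexp : Tendsto (fun x : ℝ => Real.exp (2 * ρ * h + 1 + h / (x + h))) atTop
      (𝓝 (Real.exp (2 * ρ * h + 1 + 0))) :=
    (Real.continuous_exp.tendsto _).comp (tendsto_const_nhds.add (tendsto_const_div_add_atTop h h))
  have hlim := (((hmean.comp (tendsto_atTop_add_const_right _ h tendsto_id)).mul
    ((tendsto_add_div_self_atTop h).pow p)).mul hexp).div_const (∫ y in -h..h, k y)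
  have heq : w * (Real.exp (-1) * ∫ y, k y) * 1 ^ p * Real.exp (2 * ρ * h + 1 + 0) =
      w * Real.exp (2 * ρ * h) * ∫ y, k y := by
    rw [one_pow, add_zero, mul_one, Real.exp_add, Real.exp_neg]
    field_simp
  rw [heq] at hlim
  filter_upwards [hlim.eventually_lt_const hu, eventually_gt_atTop 0] with x hxu hx
  have hxh : 0 < x + h := by positivity
  refine lt_of_le_of_lt ?_ hxu
  have hle := mul_integral_le_kernelMean (T := x + h) hρ hS0 hS hk0 hk hh (by linarith)
    (hint _ hxh)
  rw [add_sub_cancel_right, Real.exp_neg] at hle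
  simp only [Function.comp, id]
  calc S x / x ^ p
      = S x * (Real.exp (2 * ρ * h + 1 + h / (x + h)))⁻¹ * (∫ y in -h..h, k y) / x ^ p *
          Real.exp (2 * ρ * h + 1 + h / (x + h)) / ∫ y in -h..h, k y := by field_simp
    _ ≤ kernelMean k S (x + h) / x ^ p *
          Real.exp (2 * ρ * h + 1 + h / (x + h)) / ∫ y in -h..h, k y := by gcongr
    _ = _ := by rw [div_pow, div_mul_div_cancel₀ (by positivity)]

lemma eventually_lt_div_pow_of_kernelMean (hρ : 0 ≤ ρ) (hS0 : ∀ x, 0 ≤ S x)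
    (hS : Monotone fun x => S x * Real.exp (ρ * x)) (hk0 : ∀ y, 0 ≤ k y) (hk : Integrable k)
    (hkpos : 0 < ∫ y, k y)
    (hmean : Tendsto (fun T => kernelMean k S T / T ^ p) atTop
      (𝓝 (w * (Real.exp (-1) * ∫ y, k y))))
    (hB : ∀ T ≥ 1, ∀ x > 0, S x * Real.exp (-(x / T)) ≤ B * T ^ p) (hh : 0 ≤ h)
    (hu : u < Real.exp (1 - 2 * ρ * h) *
      (w * Real.exp (-1) - B * (1 - (∫ y in -h..h, k y) / ∫ y, k y))) :
    ∀ᶠ x in atTop, u < S x / x ^ p := by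
  have hshift : Tendsto (fun x : ℝ => x + -h) atTop atTop :=
    tendsto_atTop_add_const_right _ (-h) tendsto_id
  have hexp : Tendsto (fun x : ℝ => Real.exp (-(2 * ρ * h - 1 + h / (x + -h)))) atTop
      (𝓝 (Real.exp (-(2 * ρ * h - 1 + 0)))) :=
    (Real.continuous_exp.tendsto _).comp
      (tendsto_const_nhds.add (tendsto_const_div_add_atTop (-h) h)).neg
  have hlim := ((((hmean.comp hshift).sub_const
    (B * ((∫ y, k y) - ∫ y in -h..h, k y))).div_const (∫ y, k y)).mul hexp).mul
    ((tendsto_add_div_self_atTop (-h)).pow p)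
  have heq : (w * (Real.exp (-1) * ∫ y, k y) - B * ((∫ y, k y) - ∫ y in -h..h, k y)) /
      (∫ y, k y) * Real.exp (-(2 * ρ * h - 1 + 0)) * 1 ^ p = Real.exp (1 - 2 * ρ * h) *
      (w * Real.exp (-1) - B * (1 - (∫ y in -h..h, k y) / ∫ y, k y)) := by
    rw [add_zero, neg_sub, one_pow]
    field_simp
  rw [heq] at hlim
  filter_upwards [hlim.eventually_const_lt hu, eventually_ge_atTop (1 + h)] with x hxu hx
  have hT : 1 ≤ x + -h := by linarith
  have hT0 : 0 < x + -h := by linarith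
  have hx0 : 0 < x := by linarith
  refine hxu.trans_le ?_
  have hle := kernelMean_le_add (T := x + -h) hρ hS0 hS hk0 hk hh hT0 (hB _ hT)
  rw [neg_add_cancel_right, ← sub_le_iff_le_add, ← div_le_iff₀ hkpos,
    ← div_le_iff₀ (Real.exp_pos _)] at hle
  refine le_of_eq_of_le ?_ (div_le_div_of_nonneg_right hle (pow_nonneg hx0.le p))
  simp only [Function.comp]
  rw [Real.exp_neg, div_pow]
  field_simp

/-- The scaled kernels `k (R² ·)` concentrate on `[-R⁻¹, R⁻¹]` as `R → ∞`. -/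
lemma integral_comp_sq_mul_div (k : ℝ → ℝ) {R : ℝ} (hR : 0 < R) :
    (∫ y in -R⁻¹..R⁻¹, k (R ^ 2 * y)) / (∫ y, k (R ^ 2 * y)) =
      (∫ y in -R..R, k y) / ∫ y, k y := by
  have hR2 : R ^ 2 * R⁻¹ = R := by field_simp
  rw [intervalIntegral.integral_comp_mul_left _ (by positivity), Measure.integral_comp_mul_left,
    mul_neg, hR2, abs_of_pos (by positivity)]
  simp only [smul_eq_mul]
  rw [mul_div_mul_left _ _ (by positivity)]

lemma add_pow_mul_exp_neg_div_le {x T : ℝ} (hx : 0 ≤ x) (hT : 1 ≤ T) (p : ℕ) :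
    (1 + x) ^ p * Real.exp (-(x / T)) ≤ p.factorial * Real.exp 1 * T ^ p := by
  have hT0 : 0 < T := one_pos.trans_le hT
  have hpow := Real.pow_div_factorial_le_exp (1 + x / T) (by positivity) p
  rw [div_le_iff₀ (by positivity), Real.exp_add] at hpow
  calc (1 + x) ^ p * Real.exp (-(x / T))
      ≤ (T * (1 + x / T)) ^ p * Real.exp (-(x / T)) := by
        gcongr
        rw [mul_add, mul_div_cancel₀ _ hT0.ne']
        linarith
    _ ≤ T ^ p * (Real.exp 1 * Real.exp (x / T) * p.factorial) * Real.exp (-(x / T)) := by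
        rw [mul_pow]; gcongr
    _ = p.factorial * Real.exp 1 * T ^ p := by rw [Real.exp_neg]; field_simp

lemma exists_mul_exp_neg_div_le (hρ : 0 ≤ ρ) (hS0 : ∀ x, 0 ≤ S x)
    (hS : Monotone fun x => S x * Real.exp (ρ * x)) (hu : ∀ᶠ x in atTop, S x / x ^ p < u) :
    ∃ B, ∀ T ≥ 1, ∀ x > 0, S x * Real.exp (-(x / T)) ≤ B * T ^ p := by
  obtain ⟨X, hX⟩ := eventually_atTop.mp hu
  set C := max u (Real.exp (ρ * X) * S X)
  have hC : 0 ≤ C := (mul_nonneg (Real.exp_pos _).le (hS0 X)).trans (le_max_right _ _)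
  have hbound : ∀ x > 0, S x ≤ C * (1 + x) ^ p := by
    intro x hx
    rcases le_total X x with hXx | hxX
    · calc S x ≤ u * x ^ p := ((div_lt_iff₀ (by positivity)).mp (hX x hXx)).le
        _ ≤ C * (1 + x) ^ p := by
          gcongr
          · exact le_max_left _ _
          · linarith
    · calc S x ≤ Real.exp (ρ * (X - x)) * S X := le_exp_mul_of_monotone_mul_exp hS hxX
        _ ≤ Real.exp (ρ * X) * S X := by gcongr; exacts [hS0 X, by linarith]
        _ ≤ C * 1 := by rw [mul_one]; exact le_max_right _ _
        _ ≤ C * (1 + x) ^ p := by gcongr; exact one_le_pow₀ (by linarith)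
  refine ⟨C * (p.factorial * Real.exp 1), fun T hT x hx => ?_⟩
  calc S x * Real.exp (-(x / T)) ≤ C * (1 + x) ^ p * Real.exp (-(x / T)) := by
        gcongr; exact hbound x hx
    _ = C * ((1 + x) ^ p * Real.exp (-(x / T))) := by ring
    _ ≤ C * (p.factorial * Real.exp 1 * T ^ p) :=
        mul_le_mul_of_nonneg_left (add_pow_mul_exp_neg_div_le hx.le hT p) hC
    _ = C * (p.factorial * Real.exp 1) * T ^ p := by ring

lemma tendsto_integral_div_integral (hk : Integrable k) (hkpos : 0 < ∫ y, k y) :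
    Tendsto (fun R => (∫ y in -R..R, k y) / ∫ y, k y) atTop (𝓝 1) := by
  simpa only [div_self hkpos.ne', id] using (intervalIntegral_tendsto_integral hk
    tendsto_neg_atTop_atBot tendsto_id).div_const (∫ y, k y)

lemma integral_comp_sq_mul_pos (hkpos : 0 < ∫ y, k y) {R : ℝ} (hR : 0 < R) :
    0 < ∫ y, k (R ^ 2 * y) := by
  rw [Measure.integral_comp_mul_left, abs_of_pos (by positivity)]
  positivity

lemma eventually_div_pow_lt_of_kernelMean_scaled (hρ : 0 ≤ ρ) (hS0 : ∀ x, 0 ≤ S x)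
    (hS : Monotone fun x => S x * Real.exp (ρ * x))
    (hk0 : ∀ y, 0 ≤ k y) (hkc : Continuous k) (hk : Integrable k) (hkpos : 0 < ∫ y, k y)
    (hint : ∀ l > 0, ∀ T > 0,
      IntegrableOn (fun x => S x * Real.exp (-(x / T)) * k (l * (T - x))) (Ioi 0))
    (hmean : ∀ l > 0, Tendsto (fun T => kernelMean (fun y => k (l * y)) S T / T ^ p) atTop
      (𝓝 (w * (Real.exp (-1) * ∫ y, k (l * y))))) (hu : w < u) :
    ∀ᶠ x in atTop, S x / x ^ p < u := by
  have hθ := tendsto_integral_div_integral hk hkpos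
  have hinv : Tendsto (fun R : ℝ => 2 * ρ * R⁻¹) atTop (𝓝 0) := by
    simpa only [mul_zero] using tendsto_inv_atTop_zero.const_mul (2 * ρ)
  have hlim := ((Real.continuous_exp.tendsto' 0 1 Real.exp_zero).comp hinv).const_mul w |>.div
    hθ one_ne_zero
  rw [mul_one, div_one] at hlim
  obtain ⟨R, hRu, hθR, hR⟩ := ((hlim.eventually_lt_const hu).and
    ((hθ.eventually_const_lt one_pos).and (eventually_gt_atTop 0))).exists
  have hmass := integral_comp_sq_mul_pos hkpos hR
  rw [← integral_comp_sq_mul_div k hR] at hθR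
  refine eventually_div_pow_lt_of_kernelMean hρ hS0 hS (fun y => hk0 _) (by fun_prop)
    (hint _ (by positivity)) (hmean _ (by positivity)) (inv_pos.mpr hR)
    ((div_pos_iff_of_pos_right hmass).mp hθR) (lt_of_eq_of_lt ?_ hRu)
  simp only [Pi.div_apply, Function.comp]
  rw [← integral_comp_sq_mul_div k hR]
  field_simp

lemma tendsto_div_pow_of_kernelMean (hρ : 0 ≤ ρ) (hS0 : ∀ x, 0 ≤ S x)
    (hS : Monotone fun x => S x * Real.exp (ρ * x))
    (hk0 : ∀ y, 0 ≤ k y) (hkc : Continuous k) (hk : Integrable k) (hkpos : 0 < ∫ y, k y)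
    (hint : ∀ l > 0, ∀ T > 0,
      IntegrableOn (fun x => S x * Real.exp (-(x / T)) * k (l * (T - x))) (Ioi 0))
    (hmean : ∀ l > 0, Tendsto (fun T => kernelMean (fun y => k (l * y)) S T / T ^ p) atTop
      (𝓝 (w * (Real.exp (-1) * ∫ y, k (l * y))))) :
    Tendsto (fun x => S x / x ^ p) atTop (𝓝 w) := by
  have hupper : ∀ u > w, ∀ᶠ x in atTop, S x / x ^ p < u := fun _ hu =>
    eventually_div_pow_lt_of_kernelMean_scaled hρ hS0 hS hk0 hkc hk hkpos hint hmean hu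
  refine tendsto_order.mpr ⟨fun u hu => ?_, hupper⟩
  obtain ⟨B, hB⟩ := exists_mul_exp_neg_div_le hρ hS0 hS (hupper (w + 1) (lt_add_one w))
  have hexp : Tendsto (fun R : ℝ => 1 - 2 * ρ * R⁻¹) atTop (𝓝 1) := by
    simpa only [mul_zero, sub_zero] using
      (tendsto_inv_atTop_zero.const_mul (2 * ρ)).const_sub 1
  have hlim := ((Real.continuous_exp.tendsto 1).comp hexp).mul
    ((((tendsto_integral_div_integral hk hkpos).const_sub 1).const_mul B).const_sub
      (w * Real.exp (-1)))
  rw [sub_self, mul_zero, sub_zero, mul_left_comm, ← Real.exp_add, add_neg_cancel, Real.exp_zero,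
    mul_one] at hlim
  obtain ⟨R, hRu, hR⟩ := ((hlim.eventually_const_lt hu).and (eventually_gt_atTop 0)).exists
  refine eventually_lt_div_pow_of_kernelMean hρ hS0 hS (fun y => hk0 _)
    (hk.comp_mul_left' (by positivity)) (integral_comp_sq_mul_pos hkpos hR)
    (hmean _ (by positivity)) hB (inv_pos.mpr hR).le ?_
  rwa [integral_comp_sq_mul_div k hR]

end TauberianFromMeans

section PowerMeans

open MeasureTheory Set Topology

variable {k : ℝ → ℝ}

lemma tendsto_integral_comp_sub_div_mul {q : ℝ → ℝ} {C : ℝ} (hq : Measurable q)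
    (hqC : ∀ u, ‖q u‖ ≤ C) (hq1 : ContinuousAt q 1) (hk : Integrable k) :
    Tendsto (fun T : ℝ => ∫ y, q ((T - y) / T) * k y) atTop (𝓝 (q 1 * ∫ y, k y)) := by
  rw [← integral_const_mul]
  refine tendsto_integral_filter_of_dominated_convergence (fun y => C * ‖k y‖)
    (.of_forall fun T => (Measurable.aestronglyMeasurable (by fun_prop)).mul
      hk.aestronglyMeasurable)
    (.of_forall fun T => .of_forall fun y => ?_) (hk.norm.const_mul C) (.of_forall fun y => ?_)
  · rw [norm_mul]
    exact mul_le_mul_of_nonneg_right (hqC _) (norm_nonneg _)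
  · exact (hq1.tendsto.comp (tendsto_add_div_self_atTop (-y))).mul_const (k y)

lemma tendsto_kernelMean_pow (hk : Integrable k) (p : ℕ) :
    Tendsto (fun T => kernelMean k (fun x => x ^ p) T / T ^ p) atTop
      (𝓝 (Real.exp (-1) * ∫ y, k y)) := by
  set q : ℝ → ℝ := (Ioi 0).indicator fun u => u ^ p * Real.exp (-u) with hq
  have hqm : Measurable q := Measurable.indicator (by fun_prop) measurableSet_Ioi
  have hq1 : q =ᶠ[𝓝 1] fun u => u ^ p * Real.exp (-u) := by
    filter_upwards [Ioi_mem_nhds one_pos] with u hu using indicator_of_mem hu _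
  have hqC : ∀ u, ‖q u‖ ≤ p.factorial := fun u => by
    by_cases hu : 0 < u
    · have h := Real.pow_div_factorial_le_exp u hu.le p
      rw [hq, indicator_of_mem (mem_Ioi.mpr hu), Real.exp_neg, ← div_eq_mul_inv,
        Real.norm_of_nonneg (by positivity), div_le_iff₀ (Real.exp_pos u)]
      rwa [div_le_iff₀' (by positivity)] at h
    · rw [hq, indicator_of_notMem (by simpa using hu), norm_zero]
      positivity
  have hlim := tendsto_integral_comp_sub_div_mul hqm hqC
    (ContinuousAt.congr (by fun_prop) hq1.symm) hk
  rw [hq1.eq_of_nhds, one_pow, one_mul] at hlim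
  refine hlim.congr' ?_
  filter_upwards [eventually_gt_atTop 0] with T hT
  calc ∫ y, q ((T - y) / T) * k y = ∫ x, q (x / T) * k (T - x) := by
        rw [← integral_sub_left_eq_self _ volume T]; simp only [sub_sub_cancel]
    _ = ∫ x in Ioi 0, (x / T) ^ p * Real.exp (-(x / T)) * k (T - x) := by
        rw [← integral_indicator measurableSet_Ioi]
        congr 1 with x
        simp only [hq, indicator, mem_Ioi, div_pos_iff_of_pos_right hT, ite_mul, zero_mul]
    _ = kernelMean k (fun x => x ^ p) T / T ^ p := by
        rw [kernelMean, ← integral_div]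
        congr 1 with x
        rw [div_pow]
        ring

end PowerMeans

section LaplaceTransform

open MeasureTheory Set Topology

lemma integrableOn_pow_mul_exp_neg_mul (p : ℕ) {r : ℝ} (hr : 0 < r) :
    IntegrableOn (fun x : ℝ => x ^ p * Real.exp (-(r * x))) (Ioi 0) := by
  have h := integrableOn_rpow_mul_exp_neg_mul_rpow (s := p) (p := 1)
    (neg_one_lt_zero.trans_le p.cast_nonneg) one_pos hr
  simpa only [Real.rpow_natCast, Real.rpow_one, neg_mul] using h

lemma integrableOn_mul_cexp_neg_mul {f : ℝ → ℝ} {s : Set ℝ} {z : ℂ}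
    (hf : IntegrableOn (fun x => f x * Real.exp (-(z.re * x))) s) :
    IntegrableOn (fun x : ℝ => (f x : ℂ) * Complex.exp (-(z * x))) s := by
  have hunit : ∀ x : ℝ, ‖Complex.exp (↑(-(z.im * x)) * Complex.I)‖ ≤ 1 := fun x =>
    (Complex.norm_exp_ofReal_mul_I _).le
  refine (hf.ofReal.mul_bdd (Continuous.aestronglyMeasurable (by fun_prop))
    (.of_forall hunit)).congr (.of_forall fun x => ?_)
  simp only [RCLike.ofReal_eq_complex_ofReal]
  nth_rewrite 3 [← Complex.re_add_im z]
  push_cast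
  rw [mul_assoc, ← Complex.exp_add]
  ring_nf

lemma integrableOn_pow_mul_cexp_neg_mul (p : ℕ) {z : ℂ} (hz : 0 < z.re) :
    IntegrableOn (fun x : ℝ => (x : ℂ) ^ p * Complex.exp (-(z * x))) (Ioi 0) := by
  simpa only [Complex.ofReal_pow] using
    integrableOn_mul_cexp_neg_mul (integrableOn_pow_mul_exp_neg_mul p hz)

lemma tendsto_pow_mul_cexp_neg_mul_atTop (p : ℕ) {z : ℂ} (hz : 0 < z.re) :
    Tendsto (fun x : ℝ => (x : ℂ) ^ p * Complex.exp (-(z * x))) atTop (𝓝 0) := by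
  refine tendsto_zero_iff_norm_tendsto_zero.mpr
    ((tendsto_rpow_mul_exp_neg_mul_atTop_nhds_zero p z.re hz).congr' ?_)
  filter_upwards [eventually_ge_atTop 0] with x hx
  simp [Complex.norm_exp, abs_of_nonneg hx]

lemma integral_pow_mul_cexp_neg_mul (p : ℕ) {z : ℂ} (hz : 0 < z.re) :
    ∫ x in Ioi (0 : ℝ), (x : ℂ) ^ p * Complex.exp (-(z * x)) = p.factorial / z ^ (p + 1) := by
  have hz0 : z ≠ 0 := by rintro rfl; simp at hz
  induction p with
  | zero => simpa using integral_exp_mul_complex_Ioi (a := -z) (by simpa using hz) 0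
  | succ p ih =>
    have hderiv : ∀ x ∈ Ici (0 : ℝ), HasDerivAt
        (fun x : ℝ => (x : ℂ) ^ (p + 1) * Complex.exp (-(z * x)))
        ((p + 1) * ((x : ℂ) ^ p * Complex.exp (-(z * x))) -
          z * ((x : ℂ) ^ (p + 1) * Complex.exp (-(z * x)))) x := fun x _ => by
      have hid : HasDerivAt (fun x : ℝ => (x : ℂ)) 1 x := (hasDerivAt_id x).ofReal_comp
      refine ((hid.pow (p + 1)).mul (hid.const_mul z).neg.cexp).congr_deriv ?_
      simp only [Pi.pow_apply, Pi.neg_apply, Nat.cast_add, Nat.cast_one, add_tsub_cancel_right]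
      ring
    have hint := (integrableOn_pow_mul_cexp_neg_mul p hz).const_mul ((p : ℂ) + 1)
    have hint' := (integrableOn_pow_mul_cexp_neg_mul (p + 1) hz).const_mul z
    have hparts := integral_Ioi_of_hasDerivAt_of_tendsto' hderiv (hint.sub hint')
      (tendsto_pow_mul_cexp_neg_mul_atTop (p + 1) hz)
    rw [integral_sub hint hint', integral_const_mul, integral_const_mul, ih] at hparts
    simp only [Complex.ofReal_zero, ne_eq, Nat.add_eq_zero_iff, one_ne_zero, and_false,
      not_false_eq_true, zero_pow, zero_mul, sub_zero, sub_eq_zero] at hparts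
    rw [← mul_right_inj' hz0, ← hparts, Nat.factorial_succ]
    push_cast
    field_simp
    ring

end LaplaceTransform

section FourierSide

open MeasureTheory Set Topology FourierTransform

lemma ofReal_kernelMean_eq_fourier {φ : ℝ → ℂ} {k S : ℝ → ℝ} (hφ : Integrable φ)
    (hφk : ∀ y, 𝓕 φ y = k y) {T : ℝ}
    (hint : IntegrableOn (fun x => S x * Real.exp (-(x / T))) (Ioi 0)) :
    (kernelMean k S T : ℂ) = 𝓕 (fun v : ℝ => φ v * ∫ x in Ioi (0 : ℝ),
      (S x : ℂ) * Complex.exp (-(((T : ℂ)⁻¹ - 2 * Real.pi * v * Complex.I) * x))) T := by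
  set F : ℝ → ℝ → ℂ := fun x v => (Complex.exp (↑(-2 * Real.pi * v * (T - x)) * Complex.I)) *
    (((S x * Real.exp (-(x / T)) : ℝ) : ℂ) * φ v)
  have hF : Integrable (Function.uncurry F) ((volume.restrict (Ioi 0)).prod volume) :=
    (hint.ofReal.mul_prod hφ).bdd_mul (c := 1) (Continuous.aestronglyMeasurable (by fun_prop))
      (.of_forall fun z => (Complex.norm_exp_ofReal_mul_I _).le)
  calc (kernelMean k S T : ℂ) = ∫ x in Ioi 0, ∫ v, F x v := by
        rw [kernelMean, ← integral_complex_ofReal]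
        congr 1 with x
        rw [Complex.ofReal_mul, ← hφk, Real.fourier_real_eq_integral_exp_smul,
          ← integral_const_mul]
        congr 1 with v
        simp only [F, smul_eq_mul]
        ring
    _ = ∫ v, ∫ x in Ioi 0, F x v := integral_integral_swap hF
    _ = _ := by
        rw [Real.fourier_real_eq_integral_exp_smul]
        congr 1 with v
        rw [smul_eq_mul, ← integral_const_mul, ← integral_const_mul]
        congr 1 with x
        simp only [F]
        have hexp : Complex.exp (-2 * Real.pi * v * (T - x) * Complex.I) * Complex.exp (-(x / T)) =
            Complex.exp (-2 * Real.pi * v * T * Complex.I) *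
              Complex.exp (-(((T : ℂ)⁻¹ - 2 * Real.pi * v * Complex.I) * x)) := by
          rw [← Complex.exp_add, ← Complex.exp_add]
          ring_nf
        push_cast
        linear_combination (S x * φ v) * hexp

lemma one_le_norm_one_sub_mul_I (t : ℝ) : 1 ≤ ‖1 - (t : ℂ) * Complex.I‖ := by
  simpa using Complex.abs_re_le_norm (1 - (t : ℂ) * Complex.I)

lemma one_sub_mul_I_ne_zero (t : ℝ) : 1 - (t : ℂ) * Complex.I ≠ 0 :=
  norm_pos_iff.mp (one_pos.trans_le (one_le_norm_one_sub_mul_I t))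

lemma norm_div_one_sub_mul_I_pow_le (w : ℂ) (t : ℝ) (p : ℕ) :
    ‖w / (1 - (t : ℂ) * Complex.I) ^ p‖ ≤ ‖w‖ := by
  rw [norm_div, norm_pow]
  exact div_le_self (norm_nonneg _) (one_le_pow₀ (one_le_norm_one_sub_mul_I t))

lemma integrable_div_one_sub_mul_I_pow {g : ℝ → ℂ} (hg : Integrable g) (p : ℕ) (T : ℝ) :
    Integrable fun v : ℝ => g v / (1 - ↑(2 * Real.pi * v * T) * Complex.I) ^ p := by
  have hcont : Continuous fun v : ℝ => ((1 - ↑(2 * Real.pi * v * T) * Complex.I) ^ p)⁻¹ :=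
    Continuous.inv₀ (by fun_prop) fun v => pow_ne_zero p (one_sub_mul_I_ne_zero _)
  exact hg.mono (hg.aestronglyMeasurable.mul hcont.aestronglyMeasurable)
    (.of_forall fun v => norm_div_one_sub_mul_I_pow_le _ _ _)

lemma tendsto_fourier_div_pow {g : ℝ → ℂ} (hg : Integrable g) (p : ℕ) :
    Tendsto (fun T : ℝ => 𝓕 (fun v : ℝ => g v / (1 - ↑(2 * Real.pi * v * T) * Complex.I) ^ p) T)
      atTop (𝓝 0) := by
  rcases Nat.eq_zero_or_pos p with rfl | hp
  · simpa using (Real.zero_at_infty_fourier g).mono_left atTop_le_cocompact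
  have hdenom : ∀ v ≠ 0, Tendsto (fun T : ℝ => ‖1 - ↑(2 * Real.pi * v * T) * Complex.I‖ ^ p)
      atTop atTop := fun v hv => by
    refine (tendsto_pow_atTop hp.ne').comp (tendsto_atTop_mono (fun T => ?_)
      (tendsto_id.const_mul_atTop (abs_pos.mpr (mul_ne_zero Real.two_pi_pos.ne' hv))))
    calc |2 * Real.pi * v| * id T ≤ |2 * Real.pi * v * T| := by
          rw [abs_mul (2 * Real.pi * v)]
          exact mul_le_mul_of_nonneg_left (le_abs_self T) (abs_nonneg _)
      _ ≤ ‖1 - ↑(2 * Real.pi * v * T) * Complex.I‖ := by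
          simpa using Complex.abs_im_le_norm (1 - ↑(2 * Real.pi * v * T) * Complex.I)
  have hlim : Tendsto (fun T : ℝ => ∫ v : ℝ, ‖g v / (1 - ↑(2 * Real.pi * v * T) * Complex.I) ^ p‖)
      atTop (𝓝 0) := by
    rw [← integral_zero ℝ ℝ (μ := volume)]
    refine tendsto_integral_filter_of_dominated_convergence (fun v => ‖g v‖) (.of_forall fun T =>
      ?_) (.of_forall fun T => .of_forall fun v => ?_) hg.norm ?_
    · exact (integrable_div_one_sub_mul_I_pow hg p T).norm.aestronglyMeasurable
    · rw [norm_norm]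
      exact norm_div_one_sub_mul_I_pow_le _ _ _
    · filter_upwards [compl_mem_ae_iff.mpr (measure_singleton (0 : ℝ))] with v hv
      simp only [norm_div, norm_pow]
      exact tendsto_const_nhds.div_atTop (hdenom v hv)
  exact squeeze_zero_norm
    (fun T => VectorFourier.norm_fourierIntegral_le_integral_norm _ _ _ _ _) hlim

lemma tendsto_integral_norm_sub_of_continuous {G : ℝ → ℝ → ℂ}
    (hG : Continuous (Function.uncurry G)) {K : Set ℝ} (hK : IsCompact K)
    (hGK : ∀ a, ∀ v ∉ K, G a v = 0) :
    Tendsto (fun a => ∫ v, ‖G a v - G 0 v‖) (𝓝 0) (𝓝 0) := by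
  have hcont : Continuous fun a => ∫ v in K, ‖G a v - G 0 v‖ :=
    continuous_parametric_integral_of_continuous (by fun_prop) hK
  have hzero := hcont.tendsto 0
  simp only [sub_self, norm_zero, integral_zero] at hzero
  refine hzero.congr fun a => setIntegral_eq_integral_of_forall_compl_eq_zero fun v hv => ?_
  rw [hGK a v hv, hGK 0 v hv, sub_zero, norm_zero]

lemma tendsto_fourier_div_pow_of_continuous {G : ℝ → ℝ → ℂ}
    (hG : Continuous (Function.uncurry G)) {K : Set ℝ} (hK : IsCompact K)
    (hGK : ∀ a, ∀ v ∉ K, G a v = 0) (p : ℕ) :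
    Tendsto
      (fun T : ℝ => 𝓕 (fun v : ℝ => G T⁻¹ v / (1 - ↑(2 * Real.pi * v * T) * Complex.I) ^ p) T)
      atTop (𝓝 0) := by
  have hGi : ∀ a, Integrable (G a) := fun a =>
    (hG.uncurry_left a).integrable_of_hasCompactSupport (.intro hK (hGK a))
  have hdiff : Tendsto (fun T : ℝ => 𝓕 (fun v : ℝ => (G T⁻¹ v - G 0 v) /
      (1 - ↑(2 * Real.pi * v * T) * Complex.I) ^ p) T) atTop (𝓝 0) := by
    refine squeeze_zero_norm (fun T => ?_)
      ((tendsto_integral_norm_sub_of_continuous hG hK hGK).comp tendsto_inv_atTop_zero)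
    exact (VectorFourier.norm_fourierIntegral_le_integral_norm _ _ _ _ _).trans
      (integral_mono_of_nonneg (.of_forall fun v => norm_nonneg _) ((hGi _).sub (hGi _)).norm
        (.of_forall fun v => norm_div_one_sub_mul_I_pow_le _ _ _))
  have hsum := (tendsto_fourier_div_pow (hGi 0) p).add hdiff
  rw [add_zero] at hsum
  refine hsum.congr fun T => ?_
  have hsplit : (fun v : ℝ => G T⁻¹ v / (1 - ↑(2 * Real.pi * v * T) * Complex.I) ^ p) =
      (fun v : ℝ => G 0 v / (1 - ↑(2 * Real.pi * v * T) * Complex.I) ^ p) +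
        fun v : ℝ => (G T⁻¹ v - G 0 v) / (1 - ↑(2 * Real.pi * v * T) * Complex.I) ^ p := by
    ext v
    rw [Pi.add_apply, ← add_div, add_sub_cancel]
  rw [hsplit]
  exact (congrFun (VectorFourier.fourierIntegral_add Real.continuous_fourierChar
    continuous_inner (integrable_div_one_sub_mul_I_pow (hGi 0) p T)
    (integrable_div_one_sub_mul_I_pow ((hGi T⁻¹).sub (hGi 0)) p T)) T).symm

end FourierSide

section LaplaceTauberian

open MeasureTheory Set Topology FourierTransform

variable {k S : ℝ → ℝ} {H : ℂ → ℂ} {p : ℕ}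

lemma IsBandLimited.integrableOn_mul_comp_sub {f : ℝ → ℝ} {s : Set ℝ} (hk : IsBandLimited k)
    (hf : IntegrableOn f s) (T : ℝ) : IntegrableOn (fun x => f x * k (T - x)) s := by
  obtain ⟨C, hC⟩ := hk.exists_norm_le
  exact hf.mul_bdd (c := C) (hk.continuous.comp (by fun_prop)).aestronglyMeasurable
    (.of_forall fun x => hC _)

lemma kernelMean_sub_const_mul {R : ℝ → ℝ} {c T : ℝ}
    (hS : IntegrableOn (fun x => S x * Real.exp (-(x / T)) * k (T - x)) (Ioi 0))
    (hR : IntegrableOn (fun x => R x * Real.exp (-(x / T)) * k (T - x)) (Ioi 0)) :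
    kernelMean k (fun x => S x - c * R x) T = kernelMean k S T - c * kernelMean k R T := by
  rw [kernelMean, kernelMean, kernelMean, ← integral_const_mul, ← integral_sub hS (hR.const_mul c)]
  congr 1 with x
  ring

lemma tendsto_kernelMean_div_pow_zero (hk : IsBandLimited k)
    (hint : ∀ ε > 0, IntegrableOn (fun x => S x * Real.exp (-(ε * x))) (Ioi 0))
    (hH : ContinuousOn H {z | 0 ≤ z.re})
    (hL : ∀ z : ℂ, 0 < z.re →
      ∫ x in Ioi (0 : ℝ), (S x : ℂ) * Complex.exp (-(z * x)) = H z / z ^ p) :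
    Tendsto (fun T => kernelMean k S T / T ^ p) atTop (𝓝 0) := by
  obtain ⟨φ, hφ, hsupp, hφk⟩ := hk
  -- `|a|` makes `G` continuous on the whole plane, although `H` is only so on a half-plane.
  set G : ℝ → ℝ → ℂ := fun a v => φ v * H (|a| - 2 * Real.pi * v * Complex.I) with hGdef
  have hG : Continuous (Function.uncurry G) :=
    (hφ.comp continuous_snd).mul (hH.comp_continuous (by fun_prop) fun z => by simp)
  have hGK : ∀ a, ∀ v ∉ tsupport φ, G a v = 0 := fun a v hv => by
    simp only [hGdef, image_eq_zero_of_notMem_tsupport hv, zero_mul]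
  have hlim := (tendsto_fourier_div_pow_of_continuous hG hsupp hGK p).norm
  rw [norm_zero] at hlim
  refine squeeze_zero_norm' ?_ hlim
  filter_upwards [eventually_gt_atTop 0] with T hT
  have hT0 : (T : ℂ) ≠ 0 := Complex.ofReal_ne_zero.mpr hT.ne'
  have hintegrand : (fun v : ℝ => φ v * ∫ x in Ioi (0 : ℝ),
      (S x : ℂ) * Complex.exp (-(((T : ℂ)⁻¹ - 2 * Real.pi * v * Complex.I) * x))) =
      (T : ℂ) ^ p • fun v : ℝ => G T⁻¹ v / (1 - ↑(2 * Real.pi * v * T) * Complex.I) ^ p := by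
    ext v
    have hz : (T : ℂ)⁻¹ - 2 * Real.pi * v * Complex.I =
        (1 - ↑(2 * Real.pi * v * T) * Complex.I) / T := by
      push_cast; field_simp
    rw [hL _ (by simpa using hT), Pi.smul_apply, smul_eq_mul]
    simp only [hGdef, abs_of_pos (inv_pos.mpr hT), Complex.ofReal_inv]
    rw [hz, div_pow]
    have := one_sub_mul_I_ne_zero (2 * Real.pi * v * T)
    field_simp
  have hmean := ofReal_kernelMean_eq_fourier (hφ.integrable_of_hasCompactSupport hsupp) hφk
    (T := T) (by simpa only [div_eq_inv_mul] using hint _ (inv_pos.mpr hT))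
  rw [hintegrand] at hmean
  have hsmul : (kernelMean k S T : ℂ) = (T : ℂ) ^ p • 𝓕 (fun v : ℝ => G T⁻¹ v /
      (1 - ↑(2 * Real.pi * v * T) * Complex.I) ^ p) T :=
    hmean.trans (congrFun (VectorFourier.fourierIntegral_const_smul _ _ _ _ _) T)
  rw [← Complex.norm_real, Complex.ofReal_div, hsmul, Complex.ofReal_pow, smul_eq_mul,
    mul_div_cancel_left₀ _ (pow_ne_zero p hT0)]

lemma tendsto_kernelMean_div_pow (hk : IsBandLimited k) (hki : Integrable k)
    (hint : ∀ ε > 0, IntegrableOn (fun x => S x * Real.exp (-(ε * x))) (Ioi 0)) {c : ℝ}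
    (hH : ContinuousOn H {z | 0 ≤ z.re})
    (hL : ∀ z : ℂ, 0 < z.re → ∫ x in Ioi (0 : ℝ), (S x : ℂ) * Complex.exp (-(z * x)) =
      c / z ^ (p + 1) + H z / z ^ p) :
    Tendsto (fun T => kernelMean k S T / T ^ p) atTop
      (𝓝 (c / p.factorial * (Real.exp (-1) * ∫ y, k y))) := by
  have hpow : ∀ ε > 0, IntegrableOn
      (fun x : ℝ => c / p.factorial * (x ^ p * Real.exp (-(ε * x)))) (Ioi 0) := fun ε hε =>
    (integrableOn_pow_mul_exp_neg_mul p hε).const_mul _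
  have hDint : ∀ ε > 0, IntegrableOn
      (fun x : ℝ => (S x - c / p.factorial * x ^ p) * Real.exp (-(ε * x))) (Ioi 0) :=
    fun ε hε => ((hint ε hε).sub (hpow ε hε)).congr (.of_forall fun x => by
      simp only [Pi.sub_apply]; ring)
  have hDL : ∀ z : ℂ, 0 < z.re → ∫ x in Ioi (0 : ℝ),
      ((S x - c / p.factorial * x ^ p : ℝ) : ℂ) * Complex.exp (-(z * x)) = H z / z ^ p := by
    intro z hz
    have hz0 : z ≠ 0 := by rintro rfl; simp at hz
    have hp : (p.factorial : ℂ) ≠ 0 := Nat.cast_ne_zero.mpr p.factorial_ne_zero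
    calc ∫ x in Ioi (0 : ℝ), ((S x - c / p.factorial * x ^ p : ℝ) : ℂ) * Complex.exp (-(z * x))
        = ∫ x in Ioi (0 : ℝ), ((S x : ℂ) * Complex.exp (-(z * x)) -
            c / p.factorial * ((x : ℂ) ^ p * Complex.exp (-(z * x)))) := by
          congr 1 with x; push_cast; ring
      _ = H z / z ^ p := by
          rw [integral_sub (integrableOn_mul_cexp_neg_mul (hint _ hz))
            ((integrableOn_pow_mul_cexp_neg_mul p hz).const_mul _), integral_const_mul, hL z hz,
            integral_pow_mul_cexp_neg_mul p hz]
          field_simp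
          ring
  have hlim := (tendsto_kernelMean_div_pow_zero hk hDint hH hDL).add
    ((tendsto_kernelMean_pow hki p).const_mul (c / p.factorial))
  rw [zero_add] at hlim
  refine hlim.congr' ?_
  filter_upwards [eventually_gt_atTop 0] with T hT
  have hmul {f : ℝ → ℝ} (hf : ∀ ε > 0, IntegrableOn (fun x => f x * Real.exp (-(ε * x))) (Ioi 0)) :
      IntegrableOn (fun x => f x * Real.exp (-(x / T)) * k (T - x)) (Ioi 0) :=
    hk.integrableOn_mul_comp_sub (by simpa only [div_eq_inv_mul] using hf _ (inv_pos.mpr hT)) T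
  rw [kernelMean_sub_const_mul (hmul hint)
    (hmul fun ε hε => integrableOn_pow_mul_exp_neg_mul p hε)]
  ring

theorem tendsto_div_pow_of_laplace {ρ c : ℝ} (hρ : 0 ≤ ρ) (hS0 : ∀ x, 0 ≤ S x)
    (hS : Monotone fun x => S x * Real.exp (ρ * x))
    (hint : ∀ ε > 0, IntegrableOn (fun x => S x * Real.exp (-(ε * x))) (Ioi 0))
    (hH : ContinuousOn H {z | 0 ≤ z.re})
    (hL : ∀ z : ℂ, 0 < z.re → ∫ x in Ioi (0 : ℝ), (S x : ℂ) * Complex.exp (-(z * x)) =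
      c / z ^ (p + 1) + H z / z ^ p) :
    Tendsto (fun x => S x / x ^ p) atTop (𝓝 (c / p.factorial)) := by
  obtain ⟨k, hk, hk0, hki, hkpos⟩ := exists_isBandLimited_nonneg_integrable
  refine tendsto_div_pow_of_kernelMean hρ hS0 hS hk0 hk.continuous hki hkpos
    (fun l hl T hT => ?_) (fun l hl => tendsto_kernelMean_div_pow (hk.comp_mul_left hl)
      (hki.comp_mul_left' hl.ne') hint hH hL)
  exact (hk.comp_mul_left hl).integrableOn_mul_comp_sub
    (by simpa only [div_eq_inv_mul] using hint _ (inv_pos.mpr hT)) T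

end LaplaceTauberian

section DirichletTauberian

open MeasureTheory Set Topology

/-- The summatory function of `b` on a logarithmic scale, i.e. `∑ b n` over `1 ≤ n ≤ exp x`. -/
def logSummatory (b : ℕ → ℝ) (x : ℝ) : ℝ := ∑ n ∈ Finset.Icc 1 ⌊Real.exp x⌋₊, b n

variable {b : ℕ → ℝ} {ρ : ℝ}

lemma logSummatory_nonneg (hb : ∀ n, 0 ≤ b n) (x : ℝ) : 0 ≤ logSummatory b x :=
  Finset.sum_nonneg fun n _ => hb n

lemma monotone_logSummatory (hb : ∀ n, 0 ≤ b n) : Monotone (logSummatory b) := fun _ _ hxy =>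
  Finset.sum_le_sum_of_subset_of_nonneg
    (Finset.Icc_subset_Icc_right (Nat.floor_mono (Real.exp_le_exp.mpr hxy))) fun n _ _ => hb n

lemma logSummatory_log {N : ℕ} (hN : 0 < N) :
    logSummatory b (Real.log N) = ∑ n ∈ Finset.Icc 1 N, b n := by
  rw [logSummatory, Real.exp_log (Nat.cast_pos.mpr hN), Nat.floor_natCast]

lemma sum_Icc_norm_le_rpow_mul_tsum {f : ℕ → ℂ} {s : ℂ} (hs : 0 ≤ s.re)
    (hf : LSeriesSummable f s) (N : ℕ) :
    ∑ n ∈ Finset.Icc 1 N, ‖f n‖ ≤ (N : ℝ) ^ s.re * ∑' n, ‖LSeries.term f s n‖ := by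
  calc ∑ n ∈ Finset.Icc 1 N, ‖f n‖
      ≤ ∑ n ∈ Finset.Icc 1 N, (N : ℝ) ^ s.re * ‖LSeries.term f s n‖ := by
        refine Finset.sum_le_sum fun n hn => ?_
        obtain ⟨h1, hN⟩ := Finset.mem_Icc.mp hn
        have hn0 : (0 : ℝ) < (n : ℝ) ^ s.re := Real.rpow_pos_of_pos (Nat.cast_pos.mpr h1) _
        rw [LSeries.norm_term_eq, if_neg (Nat.one_le_iff_ne_zero.mp h1), ← mul_div_assoc,
          le_div_iff₀ hn0, mul_comm]
        gcongr
    _ ≤ (N : ℝ) ^ s.re * ∑' n, ‖LSeries.term f s n‖ := by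
        rw [← Finset.mul_sum]
        gcongr
        exact hf.norm.sum_le_tsum _ fun n _ => norm_nonneg _

lemma logSummatory_le (hb : ∀ n, 0 ≤ b n) {r : ℝ} (hr : 0 ≤ r)
    (hsum : LSeriesSummable (fun n => (b n : ℂ)) r) (x : ℝ) :
    logSummatory b x ≤ Real.exp (r * x) * ∑' n, ‖LSeries.term (fun n => (b n : ℂ)) r n‖ := by
  have h := sum_Icc_norm_le_rpow_mul_tsum (by simpa using hr) hsum ⌊Real.exp x⌋₊
  simp only [Complex.norm_real, Real.norm_of_nonneg (hb _), Complex.ofReal_re] at h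
  refine h.trans (mul_le_mul_of_nonneg_right ?_ (tsum_nonneg fun n => norm_nonneg _))
  rw [mul_comm r, Real.exp_mul]
  exact Real.rpow_le_rpow (Nat.cast_nonneg _) (Nat.floor_le (Real.exp_pos x).le) hr

lemma integral_logSummatory_mul_cexp (hb : ∀ n, 0 ≤ b n) (hρ : 0 ≤ ρ)
    (hsum : ∀ s : ℂ, ρ < s.re → LSeriesSummable (fun n => (b n : ℂ)) s) {s : ℂ} (hs : ρ < s.re) :
    ∫ x in Ioi (0 : ℝ), (logSummatory b x : ℂ) * Complex.exp (-(s * x)) =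
      LSeries (fun n => (b n : ℂ)) s / s := by
  obtain ⟨r, hρr, hrs⟩ := exists_between hs
  have hr := hρ.trans hρr.le
  have hs0 : s ≠ 0 := by rintro rfl; exact hs.not_ge hρ
  have hO : (fun N => ∑ n ∈ Finset.Icc 1 N, b n) =O[atTop] fun N => (N : ℝ) ^ r := by
    refine .of_bound (∑' n, ‖LSeries.term (fun n => (b n : ℂ)) r n‖) (.of_forall fun N => ?_)
    have h := sum_Icc_norm_le_rpow_mul_tsum (by simpa using hr) (hsum r hρr) N
    simp only [Complex.norm_real, Complex.ofReal_re] at h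
    rw [Real.norm_of_nonneg (by positivity : (0 : ℝ) ≤ (N : ℝ) ^ r), mul_comm]
    exact (norm_sum_le _ _).trans h
  rw [LSeries_eq_mul_integral_of_nonneg b hr hrs hO hb, mul_div_cancel_left₀ _ hs0,
    ← Real.exp_zero, ← integral_comp_exp_Ioi]
  refine setIntegral_congr_fun measurableSet_Ioi fun x _ => ?_
  have hexp : (Real.exp x : ℂ) * (Real.exp x : ℂ) ^ (-(s + 1)) = Complex.exp (-(s * x)) := by
    rw [Complex.cpow_def_of_ne_zero (by simp), ← Complex.ofReal_log (Real.exp_pos x).le,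
      Real.log_exp, Complex.ofReal_exp, ← Complex.exp_add]
    ring_nf
  simp only [Complex.real_smul, ← hexp, logSummatory, Complex.ofReal_sum]
  ring

lemma integrableOn_logSummatory_mul_exp (hb : ∀ n, 0 ≤ b n) (hρ : 0 ≤ ρ)
    (hsum : ∀ s : ℂ, ρ < s.re → LSeriesSummable (fun n => (b n : ℂ)) s) {t : ℝ} (ht : ρ < t) :
    IntegrableOn (fun x => logSummatory b x * Real.exp (-(t * x))) (Ioi 0) := by
  obtain ⟨r, hρr, hrt⟩ := exists_between ht
  set C := ∑' n, ‖LSeries.term (fun n => (b n : ℂ)) r n‖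
  have hdom : IntegrableOn (fun x : ℝ => C * (x ^ 0 * Real.exp (-((t - r) * x)))) (Ioi 0) :=
    (integrableOn_pow_mul_exp_neg_mul 0 (sub_pos.mpr hrt)).const_mul C
  refine hdom.mono' ((monotone_logSummatory hb).measurable.mul
    (by fun_prop)).aestronglyMeasurable (.of_forall fun x => ?_)
  rw [Real.norm_of_nonneg (mul_nonneg (logSummatory_nonneg hb x) (Real.exp_pos _).le)]
  calc logSummatory b x * Real.exp (-(t * x))
      ≤ Real.exp (r * x) * C * Real.exp (-(t * x)) := by
        gcongr; exact logSummatory_le hb (hρ.trans hρr.le) (hsum r hρr) x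
    _ = C * (x ^ 0 * Real.exp (-((t - r) * x))) := by
        rw [pow_zero, one_mul, mul_comm _ C, mul_assoc, ← Real.exp_add]; ring_nf

lemma integral_logSummatory_mul_exp_mul_cexp (hb : ∀ n, 0 ≤ b n) (hρ : 0 ≤ ρ)
    (hsum : ∀ s : ℂ, ρ < s.re → LSeriesSummable (fun n => (b n : ℂ)) s) {z : ℂ} (hz : 0 < z.re) :
    ∫ x in Ioi (0 : ℝ), ((logSummatory b x * Real.exp (-(ρ * x)) : ℝ) : ℂ) *
      Complex.exp (-(z * x)) = LSeries (fun n => (b n : ℂ)) (ρ + z) / (ρ + z) := by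
  rw [← integral_logSummatory_mul_cexp hb hρ hsum (by simpa using hz)]
  congr 1 with x
  rw [Complex.ofReal_mul, mul_assoc, Complex.ofReal_exp, ← Complex.exp_add]
  push_cast
  ring_nf

theorem tendsto_sum_Icc_div_of_LSeries {c : ℝ} {p : ℕ} {G : ℂ → ℂ} (hb : ∀ n, 0 ≤ b n) (hρ : 0 < ρ)
    (hsum : ∀ s : ℂ, ρ < s.re → LSeriesSummable (fun n => (b n : ℂ)) s)
    (hG : ContinuousOn G {z | ρ ≤ z.re})
    (hL : ∀ s : ℂ, ρ < s.re →
      LSeries (fun n => (b n : ℂ)) s = c / (s - ρ) ^ (p + 1) + G s / (s - ρ) ^ p) :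
    Tendsto (fun N : ℕ => (∑ n ∈ Finset.Icc 1 N, b n) / ((N : ℝ) ^ ρ * Real.log N ^ p)) atTop
      (𝓝 (c / ρ / p.factorial)) := by
  set S : ℝ → ℝ := fun x => logSummatory b x * Real.exp (-(ρ * x)) with hS
  have hρ0 : (ρ : ℂ) ≠ 0 := Complex.ofReal_ne_zero.mpr hρ.ne'
  have hne : ∀ z : ℂ, 0 ≤ z.re → (ρ : ℂ) + z ≠ 0 := fun z hz h => by
    have := congrArg Complex.re h
    rw [Complex.add_re, Complex.ofReal_re, Complex.zero_re] at this
    linarith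
  have hmono : Monotone fun x => S x * Real.exp (ρ * x) := by
    simpa [hS, mul_assoc, ← Real.exp_add] using monotone_logSummatory hb
  have hint : ∀ ε > 0, IntegrableOn (fun x => S x * Real.exp (-(ε * x))) (Ioi 0) := fun ε hε => by
    refine (integrableOn_logSummatory_mul_exp hb hρ.le hsum (lt_add_of_pos_right ρ hε)).congr
      (.of_forall fun x => ?_)
    simp only [hS, mul_assoc, ← Real.exp_add]
    ring_nf
  have hH : ContinuousOn (fun z => -c / (ρ * (ρ + z)) + G (ρ + z) / (ρ + z)) {z : ℂ | 0 ≤ z.re} :=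
    .add (.div (by fun_prop) (by fun_prop) fun z hz => mul_ne_zero hρ0 (hne z hz))
      (.div (hG.comp (by fun_prop) fun z hz => by simpa using hz) (by fun_prop) hne)
  have hlap : ∀ z : ℂ, 0 < z.re → ∫ x in Ioi (0 : ℝ), (S x : ℂ) * Complex.exp (-(z * x)) =
      (c / ρ : ℝ) / z ^ (p + 1) + (-c / (ρ * (ρ + z)) + G (ρ + z) / (ρ + z)) / z ^ p := by
    intro z hz
    have hz0 : z ≠ 0 := by rintro rfl; simp at hz
    have hρz := hne z hz.le
    rw [integral_logSummatory_mul_exp_mul_cexp hb hρ.le hsum hz, hL _ (by simpa using hz),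
      add_sub_cancel_left]
    push_cast
    field_simp
    ring
  have hlim := (tendsto_div_pow_of_laplace hρ.le
    (fun x => mul_nonneg (logSummatory_nonneg hb x) (Real.exp_pos _).le) hmono hint hH hlap).comp
    (Real.tendsto_log_atTop.comp tendsto_natCast_atTop_atTop)
  refine hlim.congr' ?_
  filter_upwards [eventually_gt_atTop 0] with N hN
  simp only [Function.comp, logSummatory_log hN]
  rw [Real.exp_neg, mul_comm ρ, ← Real.rpow_def_of_pos (Nat.cast_pos.mpr hN)]
  field_simp

end DirichletTauberian

section ProductTuples

open scoped Finset

variable {P : Set ℕ}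

lemma zero_notMem_of_forall_two_le (hP : ∀ n ∈ P, 2 ≤ n) : 0 ∉ P := fun h =>
  absurd (hP 0 h) (by norm_num)

lemma af_zero (P : Set ℕ) (n : ℕ) : af P 0 n = if n = 1 then 1 else 0 := by
  split_ifs with h
  · simp [af, h]
  · simp [af, Ne.symm h]

open Classical in
lemma af_eq_card_finMulAntidiag (P : Set ℕ) (m : ℕ) {n : ℕ} (hn : n ≠ 0) :
    af P m n = #{t ∈ Nat.finMulAntidiag m n | ∀ i, t i ∈ P} :=
  Nat.subtype_card _ fun t => by
    rw [Finset.mem_filter, Nat.mem_finMulAntidiag, and_iff_left hn, and_comm]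

lemma af_eq_zero_of_le (hP : ∀ n ∈ P, 2 ≤ n) {m n : ℕ} (hnm : n ≤ m) : af P m n = 0 := by
  have : IsEmpty {t : Fin m → ℕ // (∀ i, t i ∈ P) ∧ ∏ i, t i = n} := by
    refine ⟨fun ⟨t, htP, htn⟩ => (Nat.lt_two_pow_self (n := m)).not_ge ?_⟩
    calc 2 ^ m = ∏ _i : Fin m, 2 := by simp
      _ ≤ ∏ i, t i := Finset.prod_le_prod' fun i _ => hP _ (htP i)
      _ ≤ m := htn.trans_le hnm
  exact Nat.card_of_isEmpty

open Classical in
lemma af_succ (hP : ∀ n ∈ P, 2 ≤ n) (m n : ℕ) :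
    af P (m + 1) n = ∑ x ∈ n.divisorsAntidiagonal with x.1 ∈ P, af P m x.2 := by
  obtain rfl | hn := eq_or_ne n 0
  · simp [af_eq_zero_of_le hP]
  rw [af_eq_card_finMulAntidiag P _ hn, Finset.card_eq_sum_card_fiberwise
    (f := fun t => (t 0, ∏ i : Fin m, t i.succ))
    (t := {x ∈ n.divisorsAntidiagonal | x.1 ∈ P})]
  · refine Finset.sum_congr rfl fun x hx => ?_
    simp only [Finset.mem_filter, Nat.mem_divisorsAntidiagonal] at hx
    obtain ⟨⟨hxn, -⟩, hxP⟩ := hx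
    have hx2 : x.2 ≠ 0 := right_ne_zero_of_mul (hxn.trans_ne hn)
    rw [af_eq_card_finMulAntidiag P _ hx2]
    refine Finset.card_nbij' Fin.tail (Fin.cons (α := fun _ => ℕ) x.1) ?_ ?_ ?_ ?_
    · rintro t ht
      simp only [Finset.coe_filter, Finset.mem_filter, Set.mem_ofPred_eq, Prod.ext_iff] at ht
      simp only [Finset.coe_filter, Nat.mem_finMulAntidiag, Set.mem_ofPred_eq]
      exact ⟨⟨ht.2.2, hx2⟩, fun i => ht.1.2 _⟩
    · rintro t ht
      simp only [Finset.coe_filter, Nat.mem_finMulAntidiag, Set.mem_ofPred_eq] at ht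
      simp [Nat.mem_finMulAntidiag, Fin.prod_univ_succ, Fin.forall_fin_succ, ht.1.1, hxn, hn, hxP,
        ht.2]
    · rintro t ht
      simp only [Finset.coe_filter, Finset.mem_filter, Set.mem_ofPred_eq, Prod.ext_iff] at ht
      rw [← ht.2.1]
      exact Fin.cons_self_tail t
    · exact fun t _ => Fin.tail_cons _ _
  · intro t ht
    simp only [Finset.coe_filter, Nat.mem_finMulAntidiag, Set.mem_ofPred_eq] at ht
    simp only [Finset.coe_filter, Nat.mem_divisorsAntidiagonal, Set.mem_ofPred_eq]
    exact ⟨⟨(Fin.prod_univ_succ t).symm.trans ht.1.1, hn⟩, ht.2 0⟩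

lemma summable_af_mul (hP : ∀ n ∈ P, 2 ≤ n) (n : ℕ) (g : ℕ → ℝ) :
    Summable fun m => (af P m n : ℝ) * g m :=
  summable_of_ne_finset_zero (s := Finset.range n) fun m hm => by
    rw [af_eq_zero_of_le hP (by simpa using hm), Nat.cast_zero, zero_mul]

lemma bCoef_zero_eq_aTot (P : Set ℕ) (μ : ℝ) (n : ℕ) : bCoef P μ 0 n = aTot P n := by
  simp [aTot, bCoef]

lemma bCoef_nonneg (P : Set ℕ) (μ : ℝ) {k : ℕ} (hk : Even k) (n : ℕ) : 0 ≤ bCoef P μ k n :=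
  tsum_nonneg fun _ => mul_nonneg (Nat.cast_nonneg _) (hk.pow_nonneg _)

/-- The contribution `1_P(n) (1 - μ log n)^i` of a single factor `n` to the `i`-th moment: a tuple
with `m` factors and product `n` has deviation `m - μ log n = ∑ (1 - μ log nⱼ)`. -/
def stepCoef (P : Set ℕ) (μ : ℝ) (i : ℕ) : ℕ → ℂ :=
  P.indicator fun n => (((1 - μ * Real.log n) ^ i : ℝ) : ℂ)

lemma log_eq_add_of_mem_divisorsAntidiagonal {n : ℕ} {x : ℕ × ℕ}
    (hx : x ∈ n.divisorsAntidiagonal) : Real.log n = Real.log x.1 + Real.log x.2 := by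
  obtain ⟨hxn, hn⟩ := Nat.mem_divisorsAntidiagonal.mp hx
  rw [← hxn] at hn ⊢
  push_cast
  exact Real.log_mul (Nat.cast_ne_zero.mpr (left_ne_zero_of_mul hn))
    (Nat.cast_ne_zero.mpr (right_ne_zero_of_mul hn))

open Classical in
lemma tsum_af_succ_mul (hP : ∀ n ∈ P, 2 ≤ n) (μ : ℝ) (k n : ℕ) :
    ∑' m, (af P (m + 1) n : ℝ) * ((m + 1 : ℕ) - μ * Real.log n) ^ k =
      ∑ i ∈ Finset.range (k + 1), k.choose i *
        ∑ x ∈ n.divisorsAntidiagonal with x.1 ∈ P,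
          (1 - μ * Real.log x.1) ^ i * bCoef P μ (k - i) x.2 := by
  have hterm : ∀ m : ℕ, (af P (m + 1) n : ℝ) * ((m + 1 : ℕ) - μ * Real.log n) ^ k =
      ∑ x ∈ n.divisorsAntidiagonal with x.1 ∈ P, ∑ i ∈ Finset.range (k + 1),
        (af P m x.2 : ℝ) * ((m - μ * Real.log x.2) ^ (k - i) *
          (k.choose i * (1 - μ * Real.log x.1) ^ i)) := by
    intro m
    rw [af_succ hP, Nat.cast_sum, Finset.sum_mul]
    refine Finset.sum_congr rfl fun x hx => ?_
    rw [log_eq_add_of_mem_divisorsAntidiagonal (Finset.mem_of_mem_filter x hx), ← Finset.mul_sum]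
    congr 1
    calc ((m + 1 : ℕ) - μ * (Real.log x.1 + Real.log x.2)) ^ k
        = ((1 - μ * Real.log x.1) + (m - μ * Real.log x.2)) ^ k := by push_cast; ring
      _ = _ := (add_pow _ _ _).trans (Finset.sum_congr rfl fun i _ => by ring)
  simp_rw [hterm]
  rw [Summable.tsum_finsetSum fun x _ => summable_sum fun i _ => summable_af_mul hP _ _]
  simp_rw [Finset.mul_sum]
  rw [Finset.sum_comm]
  refine Finset.sum_congr rfl fun x _ => ?_
  rw [Summable.tsum_finsetSum fun i _ => summable_af_mul hP _ _]
  refine Finset.sum_congr rfl fun i _ => ?_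
  simp_rw [bCoef, ← mul_assoc, tsum_mul_right]
  ring

lemma bCoef_eq_delta_add_sum_convolution (hP : ∀ n ∈ P, 2 ≤ n) (μ : ℝ) (k : ℕ) :
    (fun n => (bCoef P μ k n : ℂ)) = (if k = 0 then (1 : ℂ) else 0) • LSeries.delta +
      ∑ i ∈ Finset.range (k + 1), (k.choose i : ℂ) •
        LSeries.convolution (stepCoef P μ i) fun n => (bCoef P μ (k - i) n : ℂ) := by
  classical
  funext n
  rw [bCoef, (summable_af_mul hP n _).tsum_eq_zero_add, tsum_af_succ_mul hP]
  simp only [Pi.add_apply, Finset.sum_apply, Pi.smul_apply, LSeries.convolution_def, smul_eq_mul,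
    LSeries.delta, stepCoef, Set.indicator_apply, ite_mul, zero_mul, ← Finset.sum_filter]
  push_cast
  congr 1
  rw [af_zero]
  split_ifs <;> simp_all

end ProductTuples

section StepSeries

open Topology LSeries.notation

variable {P : Set ℕ} {μ x : ℝ} {s : ℂ}

lemma term_indicator_ofReal (hP0 : 0 ∉ P) (g : ℕ → ℝ) (x : ℝ) (n : ℕ) :
    LSeries.term (P.indicator fun n => (g n : ℂ)) x n =
      (P.indicator (fun n : ℕ => (n : ℝ) ^ (-x) * g n) n : ℝ) := by
  by_cases hn : n ∈ P
  · rw [LSeries.term_of_ne_zero (ne_of_mem_of_not_mem hn hP0), Set.indicator_of_mem hn,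
      Set.indicator_of_mem hn, Real.rpow_neg (Nat.cast_nonneg n), Complex.ofReal_mul,
      Complex.ofReal_inv, Complex.ofReal_cpow (Nat.cast_nonneg n), Complex.ofReal_natCast,
      div_eq_mul_inv, mul_comm]
  · simp [LSeries.term_def, Set.indicator_of_notMem hn]

lemma LSeriesSummable_indicator_iff (hP0 : 0 ∉ P) (g : ℕ → ℝ) (x : ℝ) :
    LSeriesSummable (P.indicator fun n => (g n : ℂ)) x ↔
      Summable fun n : P => ((n : ℕ) : ℝ) ^ (-x) * g n := by
  rw [LSeriesSummable, summable_congr (term_indicator_ofReal hP0 g x), Complex.summable_ofReal]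
  exact (summable_subtype_iff_indicator (f := fun n : ℕ => (n : ℝ) ^ (-x) * g n)).symm

lemma LSeries_indicator (hP0 : 0 ∉ P) (g : ℕ → ℝ) (x : ℝ) :
    L (P.indicator fun n => (g n : ℂ)) x = (∑' n : P, ((n : ℕ) : ℝ) ^ (-x) * g n : ℝ) := by
  rw [LSeries, tsum_congr (term_indicator_ofReal hP0 g x), ← Complex.ofReal_tsum,
    ← tsum_subtype P fun n : ℕ => (n : ℝ) ^ (-x) * g n]

lemma stepCoef_succ (P : Set ℕ) (μ : ℝ) (i : ℕ) :
    stepCoef P μ (i + 1) = stepCoef P μ i - (μ : ℂ) • LSeries.logMul (stepCoef P μ i) := by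
  ext n
  by_cases hn : n ∈ P
  · simp only [stepCoef, LSeries.logMul, Pi.sub_apply, Pi.smul_apply, Set.indicator_of_mem hn,
      smul_eq_mul]
    push_cast
    ring
  · simp [stepCoef, LSeries.logMul, hn]

lemma logMul_stepCoef_zero (P : Set ℕ) (μ : ℝ) :
    LSeries.logMul (stepCoef P μ 0) = P.indicator fun n => (Real.log n : ℂ) := by
  ext n
  by_cases hn : n ∈ P <;> simp [stepCoef, LSeries.logMul, Complex.natCast_log, hn]

lemma logMul_logMul_stepCoef_zero (P : Set ℕ) (μ : ℝ) :
    LSeries.logMul (LSeries.logMul (stepCoef P μ 0)) =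
      P.indicator fun n => ((Real.log n ^ 2 : ℝ) : ℂ) := by
  ext n
  by_cases hn : n ∈ P <;> simp [stepCoef, LSeries.logMul, Complex.natCast_log, hn, sq]

lemma logMul_stepCoef_one (P : Set ℕ) (μ : ℝ) :
    LSeries.logMul (stepCoef P μ 1) = LSeries.logMul (stepCoef P μ 0) -
      (μ : ℂ) • LSeries.logMul (LSeries.logMul (stepCoef P μ 0)) := by
  rw [stepCoef_succ]
  ext n
  simp only [LSeries.logMul, Pi.sub_apply, Pi.smul_apply, smul_eq_mul]
  ring

lemma abscissaOfAbsConv_stepCoef_le (hP0 : 0 ∉ P) (μ : ℝ) (i : ℕ) :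
    LSeries.abscissaOfAbsConv (stepCoef P μ i) ≤ kappa P := by
  induction i with
  | zero =>
    refine le_sInf ?_
    rintro _ ⟨r, rfl, hr⟩
    have hsum : LSeriesSummable (stepCoef P μ 0) r :=
      (LSeriesSummable_indicator_iff hP0 _ r).mpr (by simpa only [pow_zero, mul_one] using hr)
    simpa using hsum.abscissaOfAbsConv_le
  | succ i ih =>
    have hlog : LSeries.abscissaOfAbsConv ((μ : ℂ) • LSeries.logMul (stepCoef P μ i)) ≤ kappa P :=
      LSeries.abscissaOfAbsConv_le_of_forall_lt_LSeriesSummable' fun y hy =>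
        (LSeriesSummable_logMul_of_lt_re (ih.trans_lt hy)).smul _
    rw [stepCoef_succ]
    exact (LSeries.abscissaOfAbsConv_sub_le _ _).trans (max_le ih hlog)

lemma abscissaOfAbsConv_stepCoef_lt (hP0 : 0 ∉ P) (hs : kappa P < s.re) (μ : ℝ) (i : ℕ) :
    LSeries.abscissaOfAbsConv (stepCoef P μ i) < s.re :=
  (abscissaOfAbsConv_stepCoef_le hP0 μ i).trans_lt hs

lemma LSeriesSummable_stepCoef (hP0 : 0 ∉ P) (hs : kappa P < s.re) (μ : ℝ) (i : ℕ) :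
    LSeriesSummable (stepCoef P μ i) s :=
  LSeriesSummable_of_abscissaOfAbsConv_lt_re (abscissaOfAbsConv_stepCoef_lt hP0 hs μ i)

lemma LSeriesSummable_logMul_stepCoef (hP0 : 0 ∉ P) (hs : kappa P < s.re) (μ : ℝ) (i : ℕ) :
    LSeriesSummable (LSeries.logMul (stepCoef P μ i)) s :=
  LSeriesSummable_logMul_of_lt_re (abscissaOfAbsConv_stepCoef_lt hP0 hs μ i)

lemma summable_rpow_of_kappa_lt (hP0 : 0 ∉ P) (hx : kappa P < x) :
    Summable fun n : P => ((n : ℕ) : ℝ) ^ (-x) := by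
  simpa using (LSeriesSummable_indicator_iff hP0 _ x).mp
    (LSeriesSummable_stepCoef hP0 (s := x) hx 0 0)

lemma LSeries_stepCoef_zero (hP0 : 0 ∉ P) (μ x : ℝ) : L (stepCoef P μ 0) x = Pval P x := by
  rw [stepCoef, LSeries_indicator hP0]
  simp only [pow_zero, mul_one, Pval]

lemma LSeries_logMul_stepCoef_zero (hP0 : 0 ∉ P) (μ x : ℝ) :
    L (LSeries.logMul (stepCoef P μ 0)) x = -Pderiv1 P x := by
  rw [logMul_stepCoef_zero, LSeries_indicator hP0, Pderiv1, Complex.ofReal_neg, neg_neg]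

lemma deriv_LSeries_stepCoef_zero (hP0 : 0 ∉ P) (hx : kappa P < x) (μ : ℝ) :
    deriv (L (stepCoef P μ 0)) x = Pderiv1 P x := by
  rw [LSeries_deriv (abscissaOfAbsConv_stepCoef_lt hP0 (s := x) hx μ 0),
    LSeries_logMul_stepCoef_zero hP0, neg_neg]

lemma LSeries_stepCoef_succ (hP0 : 0 ∉ P) (hs : kappa P < s.re) (μ : ℝ) (i : ℕ) :
    L (stepCoef P μ (i + 1)) s =
      L (stepCoef P μ i) s - μ * L (LSeries.logMul (stepCoef P μ i)) s := by
  rw [stepCoef_succ, LSeries_sub (LSeriesSummable_stepCoef hP0 hs μ i)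
    ((LSeriesSummable_logMul_stepCoef hP0 hs μ i).smul _), LSeries_smul]

lemma LSeries_stepCoef_one (hP0 : 0 ∉ P) (hx : kappa P < x) (μ : ℝ) :
    L (stepCoef P μ 1) x = (Pval P x + μ * Pderiv1 P x : ℝ) := by
  rw [LSeries_stepCoef_succ hP0 (s := x) hx, LSeries_stepCoef_zero hP0,
    LSeries_logMul_stepCoef_zero hP0]
  push_cast
  ring

lemma LSeries_stepCoef_two (hP0 : 0 ∉ P) (hx : kappa P < x) (μ : ℝ) :
    L (stepCoef P μ 2) x = (Pval P x + 2 * μ * Pderiv1 P x + μ ^ 2 * Pderiv2 P x : ℝ) := by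
  have habs := abscissaOfAbsConv_stepCoef_lt hP0 (s := x) hx μ 0
  have hlog2 : LSeriesSummable (LSeries.logMul (LSeries.logMul (stepCoef P μ 0))) x :=
    LSeriesSummable_logMul_of_lt_re (by rwa [LSeries.abscissaOfAbsConv_logMul])
  rw [LSeries_stepCoef_succ hP0 (s := x) hx, LSeries_stepCoef_one hP0 hx, logMul_stepCoef_one,
    LSeries_sub (LSeriesSummable_logMul_stepCoef hP0 (s := x) hx μ 0) (hlog2.smul _), LSeries_smul,
    LSeries_logMul_stepCoef_zero hP0, logMul_logMul_stepCoef_zero, LSeries_indicator hP0,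
    ← Pderiv2]
  push_cast
  ring

lemma Pderiv1_neg (hP : ∀ n ∈ P, 2 ≤ n) (hPne : P.Nonempty) (hx : kappa P < x) :
    Pderiv1 P x < 0 := by
  have hP0 := zero_notMem_of_forall_two_le hP
  have hlog := LSeriesSummable_logMul_stepCoef hP0 (s := x) hx 0 0
  rw [logMul_stepCoef_zero, LSeriesSummable_indicator_iff hP0] at hlog
  obtain ⟨n, hn⟩ := hPne
  have hn1 : (1 : ℝ) < n := mod_cast hP n hn
  exact neg_lt_zero.mpr <| hlog.tsum_pos
    (fun m => mul_nonneg (by positivity) (Real.log_natCast_nonneg m)) ⟨n, hn⟩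
    (mul_pos (by positivity) (Real.log_pos hn1))

lemma Pval_add_Pderiv_pos (hP0 : 0 ∉ P) (hP2 : P.Nontrivial) (hx : kappa P < x) (hμ : μ ≠ 0) :
    0 < Pval P x + 2 * μ * Pderiv1 P x + μ ^ 2 * Pderiv2 P x := by
  have hpos : ∀ m ∈ P, (0 : ℝ) < m := fun m hm =>
    Nat.cast_pos.mpr (Nat.pos_of_ne_zero (ne_of_mem_of_not_mem hm hP0))
  have hL := LSeries_stepCoef_two hP0 hx μ
  rw [stepCoef, LSeries_indicator hP0, Complex.ofReal_inj] at hL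
  rw [← hL]
  obtain ⟨n, hn, hn1⟩ : ∃ n ∈ P, 1 - μ * Real.log n ≠ 0 := by
    by_contra! hall
    obtain ⟨a, ha, b, hb, hab⟩ := hP2
    refine hab (Nat.cast_injective (Real.log_injOn_pos (hpos a ha) (hpos b hb) ?_))
    exact mul_left_cancel₀ hμ (by linarith [hall a ha, hall b hb])
  exact ((LSeriesSummable_indicator_iff hP0 _ x).mp
    (LSeriesSummable_stepCoef hP0 (s := x) hx μ 2)).tsum_pos (fun m => by positivity) ⟨n, hn⟩
    (mul_pos (Real.rpow_pos_of_pos (hpos n hn) _) (by positivity))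

lemma Pval_lt_Pval (hP : ∀ n ∈ P, 2 ≤ n) (hPne : P.Nonempty) (hx : kappa P < x) {y : ℝ}
    (hxy : x < y) : Pval P y < Pval P x := by
  have hP0 := zero_notMem_of_forall_two_le hP
  have hlt : ∀ n : P, ((n : ℕ) : ℝ) ^ (-y) < ((n : ℕ) : ℝ) ^ (-x) := fun n =>
    Real.rpow_lt_rpow_of_exponent_lt (by exact_mod_cast hP n n.2) (neg_lt_neg hxy)
  obtain ⟨n, hn⟩ := hPne
  exact Summable.tsum_lt_tsum (fun m => (hlt m).le) (hlt ⟨n, hn⟩)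
    (summable_rpow_of_kappa_lt hP0 (hx.trans (EReal.coe_lt_coe hxy)))
    (summable_rpow_of_kappa_lt hP0 hx)

lemma tsum_norm_term_stepCoef_zero (hP0 : 0 ∉ P) (μ : ℝ) (s : ℂ) :
    ∑' n, ‖LSeries.term (stepCoef P μ 0) s n‖ = Pval P s.re := by
  rw [Pval, tsum_subtype P fun n : ℕ => (n : ℝ) ^ (-s.re)]
  refine tsum_congr fun n => ?_
  by_cases hn : n ∈ P
  · rw [LSeries.norm_term_eq, if_neg (ne_of_mem_of_not_mem hn hP0), Set.indicator_of_mem hn,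
      Real.rpow_neg (Nat.cast_nonneg n)]
    simp [stepCoef, hn]
  · simp [stepCoef, hn, LSeries.term_def]

end StepSeries

section Nonvanishing

open LSeries.notation

variable {P : Set ℕ} {μ ρ t x : ℝ} {s : ℂ}

open scoped ComplexOrder in
lemma cpow_eq_of_LSeries_eq {f : ℕ → ℂ} (hf : 0 ≤ f) (hxs : x ≤ s.re)
    (hsum : LSeriesSummable f x) (h : L f s = L f x) {n : ℕ} (hn : n ≠ 0) (hfn : f n ≠ 0) :
    (n : ℂ) ^ s = (n : ℂ) ^ (x : ℂ) := by
  have hre : (x : ℂ).re ≤ s.re := hxs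
  have hnonneg : ∀ m, 0 ≤ LSeries.term f x m := fun m => LSeries.term_nonneg (hf m) x
  have hnorm : ∀ m, ‖LSeries.term f s m‖ ≤ (LSeries.term f x m).re := fun m =>
    (LSeries.norm_term_le_of_re_le_re f hre m).trans_eq (Complex.re_eq_norm.mpr (hnonneg m)).symm
  have hdiff := Complex.hasSum_re (hsum.hasSum.sub (hsum.of_re_le_re hre).hasSum)
  rw [← LSeries, ← LSeries, h, sub_self, Complex.zero_re] at hdiff
  have hzero := congrFun ((hasSum_zero_iff_of_nonneg fun m => by
    simpa using (Complex.re_le_norm _).trans (hnorm m)).mp hdiff) n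
  have hre_eq : (LSeries.term f x n).re = (LSeries.term f s n).re := by
    simpa [sub_eq_zero] using hzero
  have hs_nonneg : 0 ≤ LSeries.term f s n :=
    Complex.re_eq_norm.mp ((Complex.re_le_norm _).antisymm ((hnorm n).trans_eq hre_eq))
  have hterm : LSeries.term f s n = LSeries.term f x n :=
    Complex.ext hre_eq.symm <| (Complex.nonneg_iff.mp hs_nonneg).2.symm.trans
      (Complex.nonneg_iff.mp (hnonneg n)).2
  rw [LSeries.term_of_ne_zero hn, LSeries.term_of_ne_zero hn, div_eq_mul_inv,
    div_eq_mul_inv] at hterm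
  exact inv_injective (mul_left_cancel₀ hfn hterm)

lemma re_eq_and_log_mul_im_eq_of_cpow_eq {n : ℕ} (hn : 2 ≤ n)
    (h : (n : ℂ) ^ s = (n : ℂ) ^ (x : ℂ)) :
    s.re = x ∧ ∃ k : ℤ, Real.log n * s.im = k * (2 * Real.pi) := by
  have hn0 : (n : ℂ) ≠ 0 := Nat.cast_ne_zero.mpr (by omega)
  have hlog : Real.log n ≠ 0 := (Real.log_pos (by exact_mod_cast hn)).ne'
  rw [Complex.cpow_def_of_ne_zero hn0, Complex.cpow_def_of_ne_zero hn0,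
    Complex.exp_eq_exp_iff_exists_int, ← Complex.natCast_log] at h
  obtain ⟨k, hk⟩ := h
  generalize Real.log n = y at hlog hk ⊢
  refine ⟨mul_left_cancel₀ hlog ?_, k, ?_⟩
  · simpa using congrArg Complex.re hk
  · simpa using congrArg Complex.im hk

lemma dvd_of_mul_log_eq_natCast {d n j k : ℕ} (hd : 2 ≤ d) (hdn : d ≤ n) (ht : 0 < t)
    (hj : t * Real.log d = j) (hk : t * Real.log n = k) : d ∣ n ∧ j ≤ k := by
  have hd0 : (0 : ℝ) < d := by positivity
  have hn0 : (0 : ℝ) < n := hd0.trans_le (by exact_mod_cast hdn)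
  have hjk : j ≤ k := by
    rw [← Nat.cast_le (α := ℝ), ← hj, ← hk]
    gcongr
  have hj0 : j ≠ 0 := by
    rintro rfl
    exact (mul_pos ht (Real.log_pos (x := d) (by exact_mod_cast hd))).ne' (by simpa using hj)
  have hpow : n ^ j = d ^ k := by
    have hlog : Real.log ((n : ℝ) ^ j) = Real.log ((d : ℝ) ^ k) := by
      rw [Real.log_pow, Real.log_pow, ← hj, ← hk]
      ring
    exact_mod_cast Real.log_injOn_pos (pow_pos hn0 j) (pow_pos hd0 k) hlog
  exact ⟨(Nat.pow_dvd_pow_iff hj0).mp (hpow ▸ pow_dvd_pow d hjk), hjk⟩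

lemma exists_forall_eq_pow_of_mul_log_eq_natCast (ht : 0 < t)
    (hne : ∃ n : ℕ, 2 ≤ n ∧ ∃ k : ℕ, t * Real.log n = k) :
    ∃ d : ℕ, 2 ≤ d ∧ ∀ n : ℕ, 2 ≤ n → (∃ k : ℕ, t * Real.log n = k) →
      ∃ k : ℕ, 1 ≤ k ∧ n = d ^ k := by
  classical
  obtain ⟨hd, j, hj⟩ := Nat.find_spec hne
  have hmin : ∀ n : ℕ, 2 ≤ n → (∃ k : ℕ, t * Real.log n = k) → Nat.find hne ≤ n :=
    fun n hn hk => Nat.find_min' hne ⟨hn, hk⟩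
  generalize Nat.find hne = d at hd hj hmin
  refine ⟨d, hd, fun n => ?_⟩
  induction n using Nat.strong_induction_on with
  | _ n ih =>
    rintro hn ⟨k, hk⟩
    obtain ⟨⟨q, rfl⟩, hjk⟩ := dvd_of_mul_log_eq_natCast hd (hmin n hn ⟨k, hk⟩) ht hj hk
    obtain rfl | hq : q = 1 ∨ 2 ≤ q := by
      have : q ≠ 0 := by rintro rfl; omega
      omega
    · exact ⟨1, le_rfl, by simp⟩
    have hlog : t * Real.log q = (k - j : ℕ) := by
      rw [Nat.cast_mul, Real.log_mul (by positivity) (by positivity), mul_add, hj] at hk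
      push_cast [hjk]
      linarith
    obtain ⟨i, -, rfl⟩ := ih q (by nlinarith) hq ⟨_, hlog⟩
    exact ⟨i + 1, by omega, (pow_succ' d i).symm⟩

open scoped ComplexOrder in
lemma LSeries_stepCoef_zero_ne_one (hP : ∀ n ∈ P, 2 ≤ n) (hPne : P.Nonempty)
    (hnp : ∀ d : ℕ, 2 ≤ d → ¬ P ⊆ {n : ℕ | ∃ k : ℕ, 1 ≤ k ∧ n = d ^ k})
    (hκ : kappa P < ρ) (hρ : Pval P ρ = 1) (hs : ρ ≤ s.re) (hsρ : s ≠ ρ) :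
    L (stepCoef P μ 0) s ≠ 1 := by
  intro h1
  have hP0 := zero_notMem_of_forall_two_le hP
  have hnonneg : 0 ≤ stepCoef P μ 0 :=
    Set.indicator_nonneg fun n _ => by simp
  have hper : ∀ n ∈ P, s.re = ρ ∧ ∃ k : ℤ, Real.log n * s.im = k * (2 * Real.pi) := fun n hn =>
    re_eq_and_log_mul_im_eq_of_cpow_eq (hP n hn) <|
      cpow_eq_of_LSeries_eq hnonneg hs (LSeriesSummable_stepCoef hP0 (s := ρ) hκ μ 0)
        (by rw [h1, LSeries_stepCoef_zero hP0, hρ, Complex.ofReal_one])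
        (ne_of_mem_of_not_mem hn hP0) (by simp [stepCoef, hn])
  obtain ⟨n₀, hn₀⟩ := hPne
  have him : s.im ≠ 0 := fun h => hsρ (Complex.ext (hper n₀ hn₀).1 h)
  have hnat : ∀ n ∈ P, ∃ k : ℕ, |s.im| / (2 * Real.pi) * Real.log n = k := fun n hn => by
    obtain ⟨-, k, hk⟩ := hper n hn
    refine ⟨k.natAbs, ?_⟩
    have habs := congrArg abs hk
    rw [abs_mul, abs_mul, abs_of_nonneg (Real.log_natCast_nonneg n), abs_of_pos Real.two_pi_pos]
      at habs
    rw [Nat.cast_natAbs, Int.cast_abs, div_mul_eq_mul_div, mul_comm, habs,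
      mul_div_cancel_right₀ _ Real.two_pi_pos.ne']
  obtain ⟨d, hd, hpow⟩ := exists_forall_eq_pow_of_mul_log_eq_natCast
    (div_pos (abs_pos.mpr him) Real.two_pi_pos) ⟨n₀, hP n₀ hn₀, hnat n₀ hn₀⟩
  exact hnp d hd fun n hn => hpow n (hP n hn) (hnat n hn)

end Nonvanishing

section MomentSeries

open LSeries.notation

variable {P : Set ℕ} {ρ : ℝ} {s : ℂ}

lemma sum_range_divisorsAntidiagonal_le {u v : ℕ → ℝ} (hu : ∀ n, 0 ≤ u n) (hv : ∀ n, 0 ≤ v n)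
    (N : ℕ) : ∑ n ∈ Finset.range N, ∑ x ∈ n.divisorsAntidiagonal, u x.1 * v x.2 ≤
      (∑ n ∈ Finset.range N, u n) * ∑ n ∈ Finset.range N, v n := by
  have huv : ∀ x : ℕ × ℕ, 0 ≤ u x.1 * v x.2 := fun x => mul_nonneg (hu _) (hv _)
  have hdisj : ((Finset.range N : Finset ℕ) : Set ℕ).PairwiseDisjoint
      Nat.divisorsAntidiagonal := fun m _ n _ hmn =>
    Finset.disjoint_left.mpr fun x hxm hxn => hmn <|
      (Nat.mem_divisorsAntidiagonal.mp hxm).1.symm.trans (Nat.mem_divisorsAntidiagonal.mp hxn).1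
  rw [Finset.sum_mul_sum, ← Finset.sum_product', ← Finset.sum_biUnion hdisj]
  refine Finset.sum_le_sum_of_subset_of_nonneg (fun x hx => ?_) fun x _ _ => huv x
  obtain ⟨n, hn, hxn⟩ := Finset.mem_biUnion.mp hx
  rw [Finset.mem_range] at hn
  exact Finset.mem_product.mpr
    ⟨Finset.mem_range.mpr ((Nat.divisor_le (Nat.fst_mem_divisors_of_mem_antidiagonal hxn)).trans_lt
      hn), Finset.mem_range.mpr ((Nat.divisor_le
        (Nat.snd_mem_divisors_of_mem_antidiagonal hxn)).trans_lt hn)⟩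

lemma LSeriesSummable_of_eq_add_convolution {f g h : ℕ → ℂ} (hf : LSeriesSummable f s)
    (hh : LSeriesSummable h s) (hlt : ∑' n, ‖LSeries.term f s n‖ < 1)
    (hg : g = h + LSeries.convolution f g) : LSeriesSummable g s := by
  have hterm : ∀ n, ‖LSeries.term g s n‖ ≤ ‖LSeries.term h s n‖ +
      ∑ x ∈ n.divisorsAntidiagonal, ‖LSeries.term f s x.1‖ * ‖LSeries.term g s x.2‖ := fun n => by
    conv_lhs => rw [hg, LSeries.term_add_apply, LSeries.term_convolution]
    refine (norm_add_le _ _).trans (add_le_add_right ((norm_sum_le _ _).trans_eq ?_) _)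
    exact Finset.sum_congr rfl fun x _ => norm_mul _ _
  refine Summable.of_norm (summable_of_sum_range_le (c := (∑' n, ‖LSeries.term h s n‖) /
    (1 - ∑' n, ‖LSeries.term f s n‖)) (fun n => norm_nonneg _) fun N => ?_)
  rw [le_div_iff₀ (sub_pos.mpr hlt)]
  have hbound : ∑ n ∈ Finset.range N, ‖LSeries.term g s n‖ ≤ ∑' n, ‖LSeries.term h s n‖ +
      (∑' n, ‖LSeries.term f s n‖) * ∑ n ∈ Finset.range N, ‖LSeries.term g s n‖ := by
    refine (Finset.sum_le_sum fun n _ => hterm n).trans ?_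
    rw [Finset.sum_add_distrib]
    refine add_le_add (hh.norm.sum_le_tsum _ fun n _ => norm_nonneg _) ?_
    refine (sum_range_divisorsAntidiagonal_le (fun n => norm_nonneg _) (fun n => norm_nonneg _)
      N).trans ?_
    gcongr
    exact hf.norm.sum_le_tsum _ fun n _ => norm_nonneg _
  linarith

lemma LSeriesSummable_delta (s : ℂ) : LSeriesSummable δ s :=
  (hasSum_ite_eq 1 1).summable.congr fun n => (LSeries.term_delta s n).symm

lemma LSeriesSummable_bCoef (hP : ∀ n ∈ P, 2 ≤ n) (hs : kappa P < s.re) (hlt : Pval P s.re < 1)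
    (μ : ℝ) (k : ℕ) : LSeriesSummable (fun n => (bCoef P μ k n : ℂ)) s := by
  have hP0 := zero_notMem_of_forall_two_le hP
  induction k using Nat.strong_induction_on with
  | _ k ih =>
    have hrec := bCoef_eq_delta_add_sum_convolution hP μ k
    rw [Finset.sum_range_succ', Nat.choose_zero_right, Nat.cast_one, one_smul, Nat.sub_zero,
      ← add_assoc] at hrec
    refine LSeriesSummable_of_eq_add_convolution (LSeriesSummable_stepCoef hP0 hs μ 0) ?_
      ((tsum_norm_term_stepCoef_zero hP0 μ s).trans_lt hlt) hrec
    refine ((LSeriesSummable_delta s).smul _).add (LSeriesSummable.sum fun i hi => ?_)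
    have hik : k - (i + 1) < k := by
      rw [Finset.mem_range] at hi
      omega
    exact ((LSeriesSummable_stepCoef hP0 hs μ _).convolution (ih _ hik)).smul _

lemma LSeries_bCoef (hP : ∀ n ∈ P, 2 ≤ n) (hs : kappa P < s.re) (hlt : Pval P s.re < 1)
    (μ : ℝ) (k : ℕ) : L (fun n => (bCoef P μ k n : ℂ)) s = (if k = 0 then 1 else 0) +
      ∑ i ∈ Finset.range (k + 1), (k.choose i : ℂ) *
        (L (stepCoef P μ i) s * L (fun n => (bCoef P μ (k - i) n : ℂ)) s) := by
  have hP0 := zero_notMem_of_forall_two_le hP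
  have hf := LSeriesSummable_stepCoef hP0 hs μ
  have hb := LSeriesSummable_bCoef hP hs hlt μ
  have hconv : ∀ i ∈ Finset.range (k + 1), LSeriesSummable ((k.choose i : ℂ) •
      LSeries.convolution (stepCoef P μ i) fun n => (bCoef P μ (k - i) n : ℂ)) s :=
    fun i _ => ((hf i).convolution (hb _)).smul _
  conv_lhs => rw [bCoef_eq_delta_add_sum_convolution hP μ k]
  rw [LSeries_add ((LSeriesSummable_delta s).smul _) (LSeriesSummable.sum hconv), LSeries_smul,
    LSeries_sum hconv, LSeries_delta, Pi.one_apply, mul_one]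
  simp_rw [LSeries_smul, LSeries_convolution' (hf _) (hb _)]

end MomentSeries

section PoleExpansion

variable {ρ : ℝ} {d e : ℕ} {a c : ℂ} {f g : ℂ → ℂ}

lemma analyticAt_dslope (hf : AnalyticAt ℂ f c) (a : ℂ) : AnalyticAt ℂ (dslope f a) c := by
  obtain rfl | hca := eq_or_ne c a
  · obtain ⟨p, hp⟩ := hf
    exact ⟨_, hp.has_fpower_series_dslope_fslope⟩
  · refine AnalyticAt.congr ?_ (dslope_eventuallyEq_slope_of_ne f hca).symm
    exact ((analyticAt_id.sub analyticAt_const).inv (sub_ne_zero.mpr hca)).smul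
      (hf.sub analyticAt_const)

/-- The function `(s - ρ) ^ d * f s` extends analytically from `Re s > ρ` to the closed half-plane
`Re s ≥ ρ`, with value `c` at `ρ`. So `f` has a pole of order at most `d` at `ρ` and no other
singularity on the line `Re s = ρ`; only the values of `f` on `Re s > ρ` matter. -/
def HasPoleCoeff (ρ : ℝ) (d : ℕ) (c : ℂ) (f : ℂ → ℂ) : Prop :=
  ∃ R : ℂ → ℂ, AnalyticOnNhd ℂ R {s | ρ ≤ s.re} ∧ R ρ = c ∧
    ∀ s : ℂ, ρ < s.re → (s - ρ) ^ d * f s = R s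

namespace HasPoleCoeff

lemma of_analyticOnNhd (hf : AnalyticOnNhd ℂ f {s | ρ ≤ s.re}) : HasPoleCoeff ρ 0 (f ρ) f :=
  ⟨f, hf, rfl, fun s _ => by rw [pow_zero, one_mul]⟩

lemma analytic_mul (hf : HasPoleCoeff ρ d c f) (hg : AnalyticOnNhd ℂ g {s | ρ ≤ s.re}) :
    HasPoleCoeff ρ d (g ρ * c) fun s => g s * f s := by
  obtain ⟨R, hR, rfl, hfR⟩ := hf
  exact ⟨fun s => g s * R s, hg.mul hR, rfl, fun s hs => by simp only [← hfR s hs]; ring⟩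

lemma const_mul (hf : HasPoleCoeff ρ d c f) (a : ℂ) :
    HasPoleCoeff ρ d (a * c) fun s => a * f s :=
  hf.analytic_mul analyticOnNhd_const

lemma add (hf : HasPoleCoeff ρ d c f) (hg : HasPoleCoeff ρ d a g) :
    HasPoleCoeff ρ d (c + a) fun s => f s + g s := by
  obtain ⟨R, hR, rfl, hfR⟩ := hf
  obtain ⟨T, hT, rfl, hgT⟩ := hg
  exact ⟨fun s => R s + T s, hR.add hT, rfl, fun s hs => by rw [mul_add, hfR s hs, hgT s hs]⟩

lemma sum {ι : Type*} {t : Finset ι} {c : ι → ℂ} {f : ι → ℂ → ℂ}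
    (hf : ∀ i ∈ t, HasPoleCoeff ρ d (c i) (f i)) :
    HasPoleCoeff ρ d (∑ i ∈ t, c i) fun s => ∑ i ∈ t, f i s := by
  choose! R hR hRρ hfR using hf
  refine ⟨fun s => ∑ i ∈ t, R i s, Finset.analyticOnNhd_fun_sum t hR,
    Finset.sum_congr rfl hRρ, fun s hs => ?_⟩
  rw [Finset.mul_sum]
  exact Finset.sum_congr rfl fun i hi => hfR i hi s hs

lemma of_lt (hf : HasPoleCoeff ρ d c f) (hde : d < e) : HasPoleCoeff ρ e 0 f := by
  obtain ⟨R, hR, -, hfR⟩ := hf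
  refine ⟨fun s => (s - ρ) ^ (e - d) * R s,
    ((analyticOnNhd_id.sub analyticOnNhd_const).pow _).mul hR, ?_, fun s hs => ?_⟩
  · simp only [sub_self, zero_pow (Nat.sub_ne_zero_of_lt hde), zero_mul]
  · simp only [← hfR s hs, ← mul_assoc, pow_sub_mul_pow _ hde.le]

lemma exists_of_le (hf : HasPoleCoeff ρ d c f) (hde : d ≤ e) : ∃ c', HasPoleCoeff ρ e c' f := by
  obtain rfl | hlt := hde.eq_or_lt
  exacts [⟨c, hf⟩, ⟨0, hf.of_lt hlt⟩]

lemma mul_of_eq_zero (hf : HasPoleCoeff ρ (d + 1) c f) (hg : AnalyticOnNhd ℂ g {s | ρ ≤ s.re})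
    (hgρ : g ρ = 0) : HasPoleCoeff ρ d (deriv g ρ * c) fun s => g s * f s := by
  obtain ⟨R, hR, rfl, hfR⟩ := hf
  refine ⟨fun s => dslope g ρ s * R s,
    AnalyticOnNhd.mul (fun s hs => analyticAt_dslope (hg s hs) _) hR, by simp only [dslope_same],
    fun s hs => ?_⟩
  simp only [← hfR s hs, ← sub_smul_dslope_of_zero hgρ s, smul_eq_mul]
  ring

lemma of_one_sub_mul_eq {F : ℂ → ℂ} (hg : HasPoleCoeff ρ d c g)
    (hF : AnalyticOnNhd ℂ F {s | ρ ≤ s.re}) (hFρ : F ρ = 1) (hF' : deriv F ρ ≠ 0)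
    (hne : ∀ s : ℂ, ρ ≤ s.re → s ≠ ρ → F s ≠ 1)
    (hfg : ∀ s : ℂ, ρ < s.re → (1 - F s) * f s = g s) :
    HasPoleCoeff ρ (d + 1) (-c / deriv F ρ) f := by
  obtain ⟨R, hR, rfl, hgR⟩ := hg
  have hslope : ∀ s, (s - ρ) * dslope F ρ s = F s - 1 := fun s => by
    rw [← smul_eq_mul, sub_smul_dslope, hFρ]
  have hslope_ne : ∀ s ∈ {s : ℂ | ρ ≤ s.re}, dslope F ρ s ≠ 0 := fun s hs h0 => by
    obtain rfl | hsρ := eq_or_ne s ρ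
    · exact hF' (by rwa [dslope_same] at h0)
    · exact hne s hs hsρ (sub_eq_zero.mp (by rw [← hslope, h0, mul_zero]))
  refine ⟨fun s => -R s / dslope F ρ s,
    hR.neg.div (fun s hs => analyticAt_dslope (hF s hs) _) hslope_ne, by simp only [dslope_same],
    fun s hs => ?_⟩
  rw [eq_div_iff (hslope_ne s hs.le), ← hgR s hs, ← hfg s hs]
  linear_combination (s - ρ) ^ d * f s * hslope s

end HasPoleCoeff

variable {F L : ℕ → ℂ → ℂ}

/-- The shape shared by the moment series `L k = ∑ b_k(n) n ^ (-s)`: they satisfy the binomial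
recursion with coefficients `F i = ∑_{n ∈ 𝒫} (1 - μ log n) ^ i n ^ (-s)`, where on `Re s ≥ ρ` the
function `1 - F 0` has a simple zero at `ρ` and no other one, and `F 1` vanishes at `ρ` since steps
are centred. -/
structure IsMomentSystem (ρ : ℝ) (F L : ℕ → ℂ → ℂ) : Prop where
  analytic : ∀ i, AnalyticOnNhd ℂ (F i) {s | ρ ≤ s.re}
  zero_apply : F 0 ρ = 1
  deriv_ne_zero : deriv (F 0) ρ ≠ 0
  zero_ne_one : ∀ s : ℂ, ρ ≤ s.re → s ≠ ρ → F 0 s ≠ 1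
  one_apply : F 1 ρ = 0
  recursion : ∀ k (s : ℂ), ρ < s.re → L k s = (if k = 0 then 1 else 0) +
    ∑ i ∈ Finset.range (k + 1), (k.choose i : ℂ) * (F i s * L (k - i) s)

namespace IsMomentSystem

lemma one_sub_mul_succ (h : IsMomentSystem ρ F L) (k : ℕ) {s : ℂ} (hs : ρ < s.re) :
    (1 - F 0 s) * L (k + 1) s = (k + 1 : ℂ) * (F 1 s * L k s) +
      ∑ j ∈ Finset.range k, ((k + 1).choose (j + 2) : ℂ) * (F (j + 2) s * L (k - (j + 1)) s) := by
  have hL := h.recursion (k + 1) s hs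
  rw [Finset.sum_range_succ', Finset.sum_range_succ'] at hL
  simp only [zero_add, Nat.choose_zero_right, Nat.choose_one_right, Nat.cast_one, one_mul,
    Nat.sub_zero, Nat.add_sub_cancel, add_assoc, Nat.reduceAdd, if_neg (Nat.succ_ne_zero k)] at hL
  push_cast at hL
  linear_combination hL

lemma hasPoleCoeff_of_one_sub_mul (h : IsMomentSystem ρ F L) (hg : HasPoleCoeff ρ d c g)
    (hfg : ∀ s : ℂ, ρ < s.re → (1 - F 0 s) * f s = g s) :
    HasPoleCoeff ρ (d + 1) (-c / deriv (F 0) ρ) f :=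
  hg.of_one_sub_mul_eq (h.analytic 0) h.zero_apply h.deriv_ne_zero h.zero_ne_one hfg

lemma hasPoleCoeff_zero (h : IsMomentSystem ρ F L) :
    HasPoleCoeff ρ 1 (-1 / deriv (F 0) ρ) (L 0) :=
  h.hasPoleCoeff_of_one_sub_mul (.of_analyticOnNhd (f := fun _ => 1) analyticOnNhd_const)
    fun s hs => by
      have hL := h.recursion 0 s hs
      simp only [if_true, zero_add, Finset.sum_range_one, Nat.choose_self, Nat.cast_one,
        one_mul, Nat.sub_zero] at hL
      linear_combination hL

lemma exists_hasPoleCoeff (h : IsMomentSystem ρ F L) (k : ℕ) :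
    ∃ c, HasPoleCoeff ρ (k / 2 + 1) c (L k) := by
  induction k using Nat.strong_induction_on with
  | _ k ih =>
    obtain _ | k := k
    · exact ⟨_, h.hasPoleCoeff_zero⟩
    obtain ⟨_, hLk⟩ := ih k k.lt_succ_self
    obtain ⟨_, hfst⟩ := ((hLk.mul_of_eq_zero (h.analytic 1) h.one_apply).const_mul
      (k + 1)).exists_of_le (e := (k + 1) / 2) (by omega)
    have hrest : ∀ j ∈ Finset.range k, ∃ c, HasPoleCoeff ρ ((k + 1) / 2) c fun s =>
        ((k + 1).choose (j + 2) : ℂ) * (F (j + 2) s * L (k - (j + 1)) s) := fun j hj => by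
      rw [Finset.mem_range] at hj
      obtain ⟨_, hLj⟩ := ih (k - (j + 1)) (by omega)
      exact ((hLj.analytic_mul (h.analytic (j + 2))).const_mul _).exists_of_le (by omega)
    choose! c hc using hrest
    exact ⟨_, h.hasPoleCoeff_of_one_sub_mul (hfst.add (.sum hc)) fun _ => h.one_sub_mul_succ k⟩

-- Only the term `F 2 * L (2 * p)` of the recursion for `L (2 * p + 2)` has a pole of full order.
lemma hasPoleCoeff_two_mul_succ (h : IsMomentSystem ρ F L) {p : ℕ}
    (hp : HasPoleCoeff ρ (p + 1) c (L (2 * p))) :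
    HasPoleCoeff ρ (p + 2)
      (-((2 * p + 2).choose 2 * (F 2 ρ * c)) / deriv (F 0) ρ) (L (2 * p + 2)) := by
  have hfst : HasPoleCoeff ρ (p + 1) 0 fun s =>
      ((2 * p + 1 : ℕ) + 1 : ℂ) * (F 1 s * L (2 * p + 1) s) := by
    obtain ⟨_, hL⟩ := h.exists_hasPoleCoeff (2 * p + 1)
    exact ((hL.mul_of_eq_zero (h.analytic 1) h.one_apply).const_mul _).of_lt (by omega)
  have hrest : ∀ j ∈ Finset.range (2 * p), HasPoleCoeff ρ (p + 1) 0 fun s =>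
      ((2 * p + 2).choose (j + 3) : ℂ) * (F (j + 3) s * L (2 * p - (j + 1)) s) := fun j hj => by
    rw [Finset.mem_range] at hj
    obtain ⟨_, hL⟩ := h.exists_hasPoleCoeff (2 * p - (j + 1))
    exact ((hL.analytic_mul (h.analytic (j + 3))).const_mul _).of_lt (by omega)
  have hmain := (hp.analytic_mul (h.analytic 2)).const_mul ((2 * p + 2).choose 2 : ℂ)
  have hrhs := hfst.add ((HasPoleCoeff.sum hrest).add hmain)
  rw [Finset.sum_const_zero, zero_add, zero_add] at hrhs
  refine h.hasPoleCoeff_of_one_sub_mul hrhs fun s hs => ?_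
  rw [h.one_sub_mul_succ (2 * p + 1) hs, Finset.sum_range_succ']
  simp only [Nat.add_sub_add_right, zero_add]
  rfl

lemma hasPoleCoeff_two_mul (h : IsMomentSystem ρ F L) (p : ℕ) :
    HasPoleCoeff ρ (p + 1) ((-1 / deriv (F 0) ρ) * (-1 / deriv (F 0) ρ * F 2 ρ) ^ p *
      (2 * p).factorial / 2 ^ p) (L (2 * p)) := by
  induction p with
  | zero => simpa using h.hasPoleCoeff_zero
  | succ p ih =>
    refine (congrArg (HasPoleCoeff ρ (p + 2) · (L (2 * p + 2))) ?_).mp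
      (h.hasPoleCoeff_two_mul_succ ih)
    rw [Nat.cast_choose_two, mul_add_one, Nat.factorial_succ, Nat.factorial_succ]
    push_cast
    ring

end IsMomentSystem

end PoleExpansion

section EvenMoments

open LSeries.notation Topology

variable {P : Set ℕ} {ρ μ σ : ℝ}

lemma HasPoleCoeff.tendsto_sum_Icc_div {b : ℕ → ℝ} {p : ℕ} {c : ℝ} (hb : ∀ n, 0 ≤ b n)
    (hρ : 0 < ρ) (hsum : ∀ s : ℂ, ρ < s.re → LSeriesSummable (fun n => (b n : ℂ)) s)
    (hL : HasPoleCoeff ρ (p + 1) c (L fun n => (b n : ℂ))) :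
    Tendsto (fun N : ℕ => (∑ n ∈ Finset.Icc 1 N, b n) / ((N : ℝ) ^ ρ * Real.log N ^ p)) atTop
      (𝓝 (c / ρ / p.factorial)) := by
  obtain ⟨R, hR, hRρ, hLR⟩ := hL
  refine tendsto_sum_Icc_div_of_LSeries (G := dslope R ρ) hb hρ hsum
    (fun s hs => (analyticAt_dslope (hR s hs) _).continuousAt.continuousWithinAt) fun s hs => ?_
  have hsρ : s - ρ ≠ 0 := sub_ne_zero.mpr fun h => hs.ne' (congrArg Complex.re h)
  have hslope := sub_smul_dslope R (ρ : ℂ) s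
  rw [smul_eq_mul, hRρ, ← hLR s hs] at hslope
  rw [div_add_div _ _ (pow_ne_zero _ hsρ) (pow_ne_zero _ hsρ), eq_div_iff (by positivity)]
  linear_combination -(s - ρ) ^ p * hslope

lemma isMomentSystem_bCoef (hP : ∀ n ∈ P, 2 ≤ n) (hPne : P.Nonempty) (hκ : kappa P < ρ)
    (hρ : Pval P ρ = 1) (hμ : μ = -1 / Pderiv1 P ρ)
    (hnp : ∀ d : ℕ, 2 ≤ d → ¬ P ⊆ {n : ℕ | ∃ k : ℕ, 1 ≤ k ∧ n = d ^ k}) :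
    IsMomentSystem ρ (fun i => L (stepCoef P μ i)) fun k => L fun n => (bCoef P μ k n : ℂ) where
  analytic i := (LSeries_analyticOnNhd _).mono fun s hs =>
    abscissaOfAbsConv_stepCoef_lt (zero_notMem_of_forall_two_le hP)
      (hκ.trans_le (EReal.coe_le_coe_iff.mpr hs)) μ i
  zero_apply := by
    rw [LSeries_stepCoef_zero (zero_notMem_of_forall_two_le hP), hρ, Complex.ofReal_one]
  deriv_ne_zero := by
    rw [deriv_LSeries_stepCoef_zero (zero_notMem_of_forall_two_le hP) hκ]
    exact Complex.ofReal_ne_zero.mpr (Pderiv1_neg hP hPne hκ).ne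
  zero_ne_one _ := LSeries_stepCoef_zero_ne_one hP hPne hnp hκ hρ
  one_apply := by
    rw [LSeries_stepCoef_one (zero_notMem_of_forall_two_le hP) hκ, hρ, hμ,
      div_mul_cancel₀ _ (Pderiv1_neg hP hPne hκ).ne, add_neg_cancel, Complex.ofReal_zero]
  recursion k s hs := LSeries_bCoef hP (hκ.trans (EReal.coe_lt_coe hs))
    (hρ ▸ Pval_lt_Pval hP hPne hκ hs) μ k

lemma mul_LSeries_stepCoef_two (hP : ∀ n ∈ P, 2 ≤ n) (hPne : P.Nonempty) (hκ : kappa P < ρ)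
    (hρ : Pval P ρ = 1) (hμ : μ = -1 / Pderiv1 P ρ) :
    μ * L (stepCoef P μ 2) ρ = (μ ^ 3 * Pderiv2 P ρ - μ : ℝ) := by
  have hμP : μ * Pderiv1 P ρ = -1 := by rw [hμ, div_mul_cancel₀ _ (Pderiv1_neg hP hPne hκ).ne]
  rw [LSeries_stepCoef_two (zero_notMem_of_forall_two_le hP) hκ, hρ, mul_assoc, hμP]
  push_cast
  ring

lemma mu_pow_three_mul_Pderiv2_sub_pos (hP : ∀ n ∈ P, 2 ≤ n) (hP2 : P.Nontrivial) (hκ : kappa P < ρ)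
    (hρ : Pval P ρ = 1) (hμ : μ = -1 / Pderiv1 P ρ) : 0 < μ ^ 3 * Pderiv2 P ρ - μ := by
  have hP0 := zero_notMem_of_forall_two_le hP
  have hμ0 : 0 < μ := hμ ▸ div_pos_of_neg_of_neg neg_one_lt_zero (Pderiv1_neg hP hP2.nonempty hκ)
  have h := mul_LSeries_stepCoef_two hP hP2.nonempty hκ hρ hμ
  rw [LSeries_stepCoef_two hP0 hκ, ← Complex.ofReal_mul, Complex.ofReal_inj] at h
  exact h ▸ mul_pos hμ0 (Pval_add_Pderiv_pos hP0 hP2 hκ hμ0.ne')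

lemma tendsto_sum_Icc_bCoef_div (hP : ∀ n ∈ P, 2 ≤ n) (hPne : P.Nonempty) (hρ0 : 0 < ρ)
    (hκ : kappa P < ρ) (hρ : Pval P ρ = 1) (hμ : μ = -1 / Pderiv1 P ρ)
    (hσ : σ ^ 2 = μ ^ 3 * Pderiv2 P ρ - μ)
    (hnp : ∀ d : ℕ, 2 ≤ d → ¬ P ⊆ {n : ℕ | ∃ k : ℕ, 1 ≤ k ∧ n = d ^ k}) (p : ℕ) :
    Tendsto (fun N : ℕ => (∑ n ∈ Finset.Icc 1 N, bCoef P μ (2 * p) n) /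
        ((N : ℝ) ^ ρ * Real.log N ^ p)) atTop
      (𝓝 (μ * σ ^ (2 * p) * (2 * p).factorial / 2 ^ p / ρ / p.factorial)) := by
  have hderiv : -1 / deriv (L (stepCoef P μ 0)) ρ = μ := by
    rw [deriv_LSeries_stepCoef_zero (zero_notMem_of_forall_two_le hP) hκ, hμ]
    push_cast
    rfl
  have hpole := (isMomentSystem_bCoef hP hPne hκ hρ hμ hnp).hasPoleCoeff_two_mul p
  simp only [hderiv, mul_LSeries_stepCoef_two hP hPne hκ hρ hμ, ← hσ, ← Complex.ofReal_pow,
    ← pow_mul] at hpole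
  refine HasPoleCoeff.tendsto_sum_Icc_div (bCoef_nonneg P μ (even_two_mul p)) hρ0 (fun s hs => ?_)
    (by exact_mod_cast hpole)
  exact LSeriesSummable_bCoef hP (hκ.trans (EReal.coe_lt_coe hs))
    (hρ ▸ Pval_lt_Pval hP hPne hκ hs) μ _

lemma Acum_eq_sum_bCoef_zero (P : Set ℕ) (μ : ℝ) (N : ℕ) :
    Acum P N = ∑ n ∈ Finset.Icc 1 N, bCoef P μ 0 n :=
  Finset.sum_congr rfl fun n _ => (bCoef_zero_eq_aTot P μ n).symm

lemma isEquivalent_div_of_tendsto_div_mul {α : Type*} {l : Filter α} {u v w z : α → ℝ} {a b : ℝ}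
    (hu : Tendsto (fun x => u x / (w x * z x)) l (𝓝 a)) (hv : Tendsto (fun x => v x / w x) l (𝓝 b))
    (ha : a ≠ 0) (hb : b ≠ 0) (hw : ∀ᶠ x in l, w x ≠ 0) :
    (fun x => u x / v x) ~[l] fun x => a / b * z x := by
  refine isEquivalent_of_tendsto_one ?_
  have hlim := (hu.div hv hb).div_const (a / b)
  rw [div_self (div_ne_zero ha hb)] at hlim
  refine hlim.congr' ?_
  filter_upwards [hw] with x hwx
  simp only [Pi.div_apply, div_eq_mul_inv, mul_inv, inv_inv]
  field_simp

end EvenMoments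

/-- **Even central moments relative to `μ log ν_N`.** Under the stated assumptions,
including non-periodicity, for every even `k ≥ 0`,
`(1/A(N)) Σ_{n ≤ N} b_k(n) ∼ (k!/(2^{k/2} (k/2)!)) σ^k (log N)^{k/2}`. -/
theorem even_moment_asymptotic
    (P : Set ℕ) (hP : ∀ n ∈ P, 2 ≤ n) (hP2 : P.Nontrivial)
    (hκ : 1 < PvalE P (kappa P))
    (ρ : ℝ) (hρ0 : 0 < ρ) (hρκ : kappa P < (ρ : EReal)) (hρ1 : Pval P ρ = 1)
    (μ σ : ℝ) (hμ : μ = -1 / Pderiv1 P ρ)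
    (hσ0 : 0 ≤ σ) (hσ : σ ^ 2 = μ ^ 3 * Pderiv2 P ρ - μ)
    (hnp : ∀ d : ℕ, 2 ≤ d → ¬ P ⊆ {n : ℕ | ∃ k : ℕ, 1 ≤ k ∧ n = d ^ k})
    (k : ℕ) (hk : Even k) :
    Asymptotics.IsEquivalent atTop
      (fun N : ℕ => (∑ n ∈ Finset.Icc 1 N, bCoef P μ k n) / Acum P N)
      (fun N : ℕ =>
        (Nat.factorial k : ℝ) / (2 ^ (k / 2) * Nat.factorial (k / 2))
          * σ ^ k * (Real.log N) ^ (k / 2)) := by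
  obtain ⟨p, rfl⟩ := hk.two_dvd
  have hμ0 : μ ≠ 0 := hμ ▸ div_ne_zero (by norm_num) (Pderiv1_neg hP hP2.nonempty hρκ).ne
  have hσ_ne : σ ≠ 0 := by
    rintro rfl
    simpa [← hσ] using mu_pow_three_mul_Pderiv2_sub_pos hP hP2 hρκ hρ1 hμ
  have hmoment := tendsto_sum_Icc_bCoef_div hP hP2.nonempty hρ0 hρκ hρ1 hμ hσ hnp
  have hcount := hmoment 0
  simp only [mul_zero, pow_zero, mul_one, Nat.factorial_zero, Nat.cast_one, div_one,
    ← Acum_eq_sum_bCoef_zero] at hcount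
  have hpow : ∀ᶠ N : ℕ in atTop, (N : ℝ) ^ ρ ≠ 0 :=
    (eventually_ge_atTop 1).mono fun N hN => by positivity
  refine (isEquivalent_div_of_tendsto_div_mul (hmoment p) hcount (by positivity) (by positivity)
    hpow).congr_right (.of_forall fun N => ?_)
  rw [Nat.mul_div_cancel_left p two_pos]
  field_simp
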